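/- arXiv:math/0411009 — 3 statements merged into one kernel-verified Lean document; each statement's English description precedes it below -/
import Mathlib

section
/- Let G be a finite simple graph that has at least one edge and in which every edge belongs to at least 4 triangles (i.e., the two endpoints of every edge have at least 4 common neighbors). Then either G has a K_6 minor, or G is a clique sum over K_l for some l ≤ 4. -/
open scoped Classical

/-- `H` is a minor of `G`: there is a family of pairwise disjoint nonempty connected
"branch sets" in `G`, one for each vertex of `H`, such that every edge of `H` is
realized by an edge of `G` between the corresponding branch sets. -/
def HasMinor {V W : Type*} (G : SimpleGraph V) (H : SimpleGraph W) : Prop :=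
  ∃ B : W → Set V,
    (∀ i, (B i).Nonempty) ∧
    (∀ i j, i ≠ j → Disjoint (B i) (B j)) ∧
    (∀ i, (G.induce (B i)).Connected) ∧
    (∀ i j, H.Adj i j → ∃ x ∈ B i, ∃ y ∈ B j, G.Adj x y)

namespace K6P

/-! ### A small certified search

Vertices of the link are `0, …, n-1`; a pair `(i, j)` is encoded by the bit `8 * i + j`. -/

def bt (E i j : ℕ) : Bool := Nat.testBit E (8 * i + j)

def setb (E i j : ℕ) : ℕ := E ||| (1 <<< (8 * i + j)) ||| (1 <<< (8 * j + i))

/-- a decision tree: split on the adjacency of `i, j`, or a model given by two pairs -/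
inductive Tr where
  | m (p q r s : ℕ) : Tr
  | s (i j : ℕ) (t₁ t₂ : Tr) : Tr

/-- the vertex `i` has all its possible non-neighbours in `N` (`i` itself included) -/
def full (n N i : ℕ) : Bool := decide (n - 4 ≤ (List.range n).countP (fun j => bt N i j))

/-- known or forced edge -/
def frc (n E N i j : ℕ) : Bool := bt E i j || (!bt N i j && (full n N i || full n N j))

def compl (n : ℕ) (m : List (ℕ × ℕ)) : List (ℕ × ℕ) :=
  m ++ ((List.range n).filter fun i => m.all fun x => x.1 != i && x.2 != i).map fun i => (i, i)

def Dj (x y : ℕ × ℕ) : Prop := x.1 ≠ y.1 ∧ x.1 ≠ y.2 ∧ x.2 ≠ y.1 ∧ x.2 ≠ y.2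

def Lk (Q : ℕ → ℕ → Prop) (x y : ℕ × ℕ) : Prop :=
  Q x.1 y.1 ∨ Q x.1 y.2 ∨ Q x.2 y.1 ∨ Q x.2 y.2

def djb (x y : ℕ × ℕ) : Bool := x.1 != y.1 && x.1 != y.2 && x.2 != y.1 && x.2 != y.2

def lkb (e : ℕ → ℕ → Bool) (x y : ℕ × ℕ) : Bool :=
  e x.1 y.1 || e x.1 y.2 || e x.2 y.1 || e x.2 y.2

def pwb (e : ℕ → ℕ → Bool) : List (ℕ × ℕ) → Bool
  | [] => true
  | x :: xs => xs.all (fun y => djb x y && lkb e x y) && pwb e xs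

def good (n : ℕ) (e : ℕ → ℕ → Bool) (m : List (ℕ × ℕ)) : Bool :=
  m.length == 5 &&
  m.all (fun x => Nat.blt x.1 n && Nat.blt x.2 n && (x.1 == x.2 || e x.1 x.2)) && pwb e m

def chk (n : ℕ) : Tr → ℕ → ℕ → Bool
  | .m p q r s, E, N => good n (frc n E N) (compl n [(p, q), (r, s)])
  | .s i j t₁ t₂, E, N => Nat.blt i n && Nat.blt j n &&
      (chk n t₁ (setb E i j) N && chk n t₂ E (setb N i j))

def N0 (n : ℕ) : ℕ := (List.range n).foldl (fun N i => setb N i i) (setb 0 0 1)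


def cert6 : Tr :=
  .s 4 5 (.s 3 5 (.s 3 4 (.m 0 2 1 1) (.m 2 3 0 0)) (.m 2 3 0 0)) (.m 2 4 0 0)

def cert7 : Tr :=
  .s 0 4 (.s 1 4 (.s 0 6 (.s 1 6 (.s 0 5 (.s 1 5 (.s 1 3 (.s 0 3 (.s 2 5 (.s 2 6 (.s 2 4 (.s 4 6
  (.m 0 3 2 5) (.s 3 4 (.s 3 6 (.m 0 5 2 4) (.m 0 3 2 4)) (.m 0 3 2 6))) (.s 3 4 (.s 0 2 (.s 1 2
  (.s 5 6 (.m 0 3 1 4) (.s 4 5 (.s 3 6 (.m 2 5 3 4) (.m 0 3 2 5)) (.m 2 5 3 4))) (.s 4 5 (.m 0 6 2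
  3) (.m 0 5 2 3))) (.s 4 6 (.m 0 5 2 3) (.m 0 6 2 3))) (.m 0 3 2 5))) (.s 0 2 (.s 1 2 (.s 4 6 (.s
  3 6 (.s 3 4 (.m 0 2 1 5) (.s 2 4 (.s 2 3 (.m 0 5 2 3) (.m 2 4 3 5)) (.m 2 3 4 5))) (.s 3 4 (.s 2
  3 (.m 2 3 4 6) (.m 0 2 3 4)) (.m 0 4 1 6))) (.s 4 5 (.s 2 3 (.m 0 4 2 3) (.m 0 3 1 6)) (.m 2 4 3
  6))) (.s 4 6 (.s 5 6 (.m 0 3 2 4) (.m 0 5 2 3)) (.m 0 4 2 3))) (.s 4 6 (.s 5 6 (.m 0 3 2 4) (.m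
  0 5 2 3)) (.m 0 4 2 3)))) (.s 0 2 (.s 1 2 (.s 2 3 (.s 5 6 (.s 2 4 (.s 3 4 (.m 0 5 1 6) (.s 4 5
  (.s 3 5 (.m 0 6 2 3) (.m 2 3 4 5)) (.m 2 3 4 6))) (.s 3 4 (.s 3 5 (.m 0 4 2 3) (.m 2 3 4 5)) (.m
  0 2 1 3))) (.s 3 6 (.s 4 6 (.m 0 2 3 5) (.m 0 4 1 5)) (.m 2 3 4 5))) (.s 3 5 (.s 4 6 (.m 0 3 1
  5) (.s 3 6 (.s 3 4 (.m 0 5 2 4) (.m 2 4 3 5)) (.m 2 4 3 5))) (.m 0 2 3 4))) (.s 4 5 (.s 5 6 (.m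
  0 3 2 4) (.m 0 6 2 3)) (.m 0 4 2 3))) (.s 5 6 (.s 4 5 (.m 0 3 2 4) (.m 0 4 2 3)) (.m 0 6 2 3))))
  (.s 3 5 (.s 3 4 (.s 3 6 (.s 4 5 (.m 0 2 3 6) (.s 2 4 (.s 5 6 (.m 0 2 3 4) (.m 0 6 2 4)) (.m 0 2
  3 5))) (.s 2 6 (.s 4 6 (.m 0 5 2 3) (.m 0 4 2 3)) (.m 0 2 3 4))) (.s 2 4 (.s 4 6 (.m 0 5 2 3)
  (.m 0 6 2 3)) (.m 0 2 3 5))) (.s 2 5 (.s 5 6 (.m 0 4 2 3) (.m 0 6 2 3)) (.m 0 2 3 4)))) (.s 0 3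
  (.s 3 5 (.s 3 4 (.s 3 6 (.s 4 5 (.m 1 2 3 6) (.s 2 4 (.s 2 5 (.m 1 6 2 4) (.m 1 2 3 4)) (.m 1 2
  3 5))) (.s 2 6 (.s 5 6 (.m 0 4 2 3) (.m 0 5 2 3)) (.m 1 2 3 4))) (.s 2 4 (.s 4 5 (.m 0 6 2 3)
  (.m 0 5 2 3)) (.m 1 2 3 5))) (.s 2 5 (.s 5 6 (.m 0 4 2 3) (.m 0 6 2 3)) (.m 1 2 3 4))) (.s 4 5
  (.m 0 2 1 6) (.s 5 6 (.m 0 2 1 4) (.m 0 4 1 6))))) (.s 4 5 (.s 5 6 (.s 3 5 (.s 4 6 (.m 1 2 3 5)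
  (.s 3 4 (.s 0 2 (.s 0 3 (.m 0 2 1 6) (.s 3 6 (.s 2 3 (.m 0 2 1 4) (.s 2 5 (.m 0 4 1 2) (.m 0 1 2
  4))) (.m 0 2 1 6))) (.m 1 2 5 6)) (.s 2 3 (.s 0 3 (.m 1 6 2 3) (.m 0 2 1 4)) (.m 1 2 4 5)))) (.s
  3 4 (.s 3 6 (.m 1 2 3 4) (.m 0 6 2 5)) (.m 0 4 2 5))) (.s 2 6 (.s 3 6 (.s 0 2 (.m 0 4 3 5) (.m 0
  4 2 5)) (.m 1 3 2 5)) (.m 1 2 3 5))) (.s 2 4 (.s 3 4 (.s 0 3 (.m 0 6 2 5) (.m 0 6 3 5)) (.m 1 3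
  2 4)) (.m 1 2 3 4)))) (.s 1 5 (.s 2 5 (.s 5 6 (.s 4 5 (.s 4 6 (.m 0 3 2 5) (.s 2 4 (.s 1 3 (.s 1
  2 (.m 0 3 5 6) (.s 2 6 (.s 2 3 (.m 0 4 1 3) (.s 3 5 (.m 0 3 1 4) (.m 0 1 3 4))) (.m 0 4 2 3)))
  (.m 0 3 5 6)) (.s 2 3 (.s 1 3 (.m 0 6 2 3) (.m 0 6 2 3)) (.m 0 3 4 5)))) (.s 2 4 (.s 3 4 (.s 1 3
  (.m 0 6 2 4) (.m 0 6 3 4)) (.m 0 3 2 4)) (.m 0 2 3 4))) (.s 3 6 (.s 2 6 (.s 1 2 (.m 0 4 3 5) (.m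
  0 4 2 5)) (.m 0 2 3 5)) (.m 0 3 2 5))) (.s 2 4 (.s 2 6 (.m 0 3 2 4) (.m 0 6 2 3)) (.m 0 4 2 3)))
  (.s 4 6 (.m 0 2 1 3) (.s 2 4 (.m 0 3 1 6) (.m 0 2 1 6))))) (.s 4 6 (.s 2 6 (.s 0 2 (.s 5 6 (.s 2
  4 (.m 1 3 5 6) (.s 4 5 (.s 0 3 (.s 0 5 (.m 0 3 1 2) (.s 2 5 (.s 3 6 (.m 0 2 1 3) (.s 3 5 (.m 0 3
  1 2) (.m 0 1 2 3))) (.m 0 3 1 2))) (.m 1 3 2 6)) (.s 3 5 (.s 0 3 (.m 0 2 5 6) (.m 1 2 3 4)) (.m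
  1 3 4 6)))) (.s 4 5 (.s 2 5 (.m 1 3 2 5) (.m 0 2 3 6)) (.m 0 4 3 6))) (.s 2 4 (.s 5 6 (.s 2 5
  (.s 4 5 (.m 0 3 1 2) (.s 3 6 (.m 0 4 1 3) (.s 2 3 (.m 0 3 1 4) (.m 0 1 3 4)))) (.m 0 3 1 5)) (.s
  2 5 (.m 0 5 1 3) (.m 0 1 3 5))) (.s 4 5 (.m 0 3 2 6) (.m 0 5 2 6)))) (.s 2 3 (.s 0 2 (.s 2 5 (.s
  0 5 (.m 0 4 3 6) (.m 0 4 5 6)) (.m 1 5 2 3)) (.m 0 3 4 6)) (.m 1 3 2 5))) (.s 3 4 (.s 2 4 (.s 0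
  3 (.m 1 5 2 4) (.m 0 5 3 6)) (.s 0 3 (.m 1 2 4 5) (.m 0 2 3 6))) (.s 0 5 (.m 1 3 2 4) (.m 0 3 5
  6))))) (.s 1 6 (.s 4 6 (.s 5 6 (.s 1 5 (.s 2 6 (.s 4 5 (.m 0 3 2 6) (.s 2 5 (.s 1 3 (.s 1 2 (.m
  0 3 4 6) (.s 2 4 (.s 3 6 (.m 0 3 1 4) (.s 2 3 (.m 0 4 1 3) (.m 0 1 3 4))) (.m 0 4 1 3))) (.m 0 3
  4 6)) (.s 2 3 (.s 1 2 (.m 0 4 2 3) (.m 0 4 2 3)) (.m 0 3 5 6)))) (.s 2 5 (.s 2 4 (.m 0 3 2 4)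
  (.m 0 4 2 3)) (.m 0 5 2 3))) (.s 4 5 (.s 3 6 (.s 3 5 (.s 3 4 (.m 0 2 1 6) (.s 2 6 (.m 0 2 1 3)
  (.s 2 5 (.m 0 3 1 2) (.m 0 1 2 3)))) (.m 0 3 1 2)) (.s 3 5 (.m 0 2 1 3) (.m 0 1 2 3))) (.s 2 4
  (.m 0 3 5 6) (.m 0 2 5 6)))) (.s 1 5 (.s 2 5 (.s 3 5 (.s 1 3 (.m 0 4 2 5) (.m 0 4 3 5)) (.m 0 3
  2 5)) (.m 0 2 3 5)) (.m 0 2 3 5))) (.s 3 4 (.s 4 5 (.s 1 3 (.m 0 2 4 5) (.m 0 2 3 4)) (.s 1 2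
  (.m 0 5 3 4) (.m 0 5 2 4))) (.s 1 2 (.m 0 3 4 5) (.m 0 3 2 4)))) (.s 2 4 (.m 0 3 1 5) (.s 2 5
  (.m 0 3 1 4) (.m 0 4 1 5))))) (.s 4 6 (.s 0 6 (.s 2 4 (.s 0 2 (.s 3 4 (.s 2 6 (.m 1 5 3 4) (.s 3
  6 (.s 0 5 (.s 0 3 (.m 0 5 1 2) (.s 2 3 (.s 4 5 (.m 0 2 1 5) (.s 3 5 (.m 0 5 1 2) (.m 0 1 2 5)))
  (.m 0 5 1 2))) (.m 1 5 2 4)) (.s 3 5 (.s 0 3 (.m 1 2 3 5) (.m 0 2 3 4)) (.m 1 5 4 6)))) (.s 2 3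
  (.s 3 6 (.m 1 5 2 3) (.m 0 6 4 5)) (.m 0 2 4 5))) (.s 2 6 (.s 3 4 (.s 2 3 (.s 3 6 (.m 0 4 1 5)
  (.s 4 5 (.m 0 3 1 5) (.s 2 5 (.m 0 5 1 3) (.m 0 1 3 5)))) (.m 0 5 1 3)) (.s 2 3 (.m 0 3 1 5) (.m
  0 1 3 5))) (.s 5 6 (.m 0 3 2 4) (.m 0 5 2 4)))) (.s 0 2 (.s 2 3 (.s 2 5 (.s 0 3 (.m 0 6 4 5) (.m
  0 6 3 4)) (.m 1 5 2 3)) (.m 1 3 2 5)) (.m 0 3 4 5))) (.s 4 5 (.s 5 6 (.s 2 4 (.s 2 6 (.s 2 5 (.m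
  0 3 1 6) (.s 3 6 (.m 0 3 1 2) (.s 3 4 (.m 0 2 1 3) (.m 0 1 2 3)))) (.m 0 3 1 2)) (.s 2 6 (.m 0 2
  1 3) (.m 0 1 2 3))) (.s 3 5 (.m 0 2 4 5) (.m 0 3 4 5))) (.s 5 6 (.s 3 6 (.m 0 5 1 2) (.m 0 5 1
  3)) (.m 0 1 2 5)))) (.s 0 6 (.s 3 6 (.s 0 3 (.s 5 6 (.m 1 2 4 5) (.m 1 5 2 4)) (.s 2 3 (.m 0 6 1
  5) (.m 0 6 1 2))) (.s 0 2 (.m 1 3 4 5) (.m 0 3 2 4))) (.m 0 2 3 4)))) (.s 1 4 (.s 4 6 (.s 1 6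
  (.s 4 5 (.s 1 5 (.s 3 4 (.s 5 6 (.m 0 2 3 4) (.s 3 6 (.s 1 2 (.s 1 3 (.m 0 2 4 5) (.s 3 5 (.s 2
  3 (.m 0 5 1 2) (.s 2 4 (.m 0 2 1 5) (.m 0 1 2 5))) (.m 0 5 1 2))) (.m 0 2 4 5)) (.s 2 3 (.s 1 2
  (.m 0 5 2 3) (.m 0 5 2 3)) (.m 0 2 4 6)))) (.s 3 6 (.s 3 5 (.m 0 2 3 5) (.m 0 5 2 3)) (.m 0 6 2
  3))) (.s 5 6 (.s 2 4 (.s 2 5 (.s 2 6 (.m 0 3 1 4) (.s 3 4 (.m 0 3 1 2) (.s 3 5 (.m 0 2 1 3) (.m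
  0 1 2 3)))) (.m 0 2 1 3)) (.s 2 5 (.m 0 3 1 2) (.m 0 1 2 3))) (.s 2 4 (.m 0 6 1 3) (.m 0 6 1
  2)))) (.s 1 5 (.s 3 5 (.s 2 5 (.s 1 2 (.m 0 6 3 4) (.m 0 6 2 4)) (.m 0 2 3 4)) (.m 0 3 2 4)) (.m
  0 2 3 5))) (.s 5 6 (.s 4 5 (.s 2 4 (.s 2 6 (.s 2 5 (.m 0 3 1 4) (.s 3 6 (.m 0 2 1 3) (.s 3 4 (.m
  0 3 1 2) (.m 0 1 2 3)))) (.m 0 2 1 3)) (.s 2 6 (.m 0 3 1 2) (.m 0 1 2 3))) (.s 3 6 (.m 0 2 1 5)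
  (.m 0 3 1 5))) (.s 4 5 (.s 2 5 (.m 0 3 4 6) (.m 0 2 4 6)) (.m 0 1 2 5)))) (.s 1 6 (.s 3 6 (.s 2
  6 (.s 1 2 (.m 0 5 3 4) (.m 0 5 2 4)) (.s 1 3 (.m 0 2 4 5) (.m 0 2 3 4))) (.s 1 2 (.m 0 3 4 5)
  (.m 0 3 2 4))) (.m 0 2 3 6))) (.s 2 6 (.m 0 3 1 5) (.s 2 5 (.m 0 3 1 6) (.m 0 5 1 6))))


theorem cert6_ok : chk 6 cert6 (setb 0 0 1) (N0 6) = true := by decide +kernel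

theorem cert7_ok : chk 7 cert7 (setb 0 0 1) (N0 7) = true := by decide +kernel

theorem bt_setb {E i j a b : ℕ} (hi : i < 8) (hj : j < 8) (ha : a < 8) (hb : b < 8) :
    bt (setb E i j) a b = true ↔ (bt E a b = true ∨ (a = i ∧ b = j) ∨ (a = j ∧ b = i)) := by
  unfold bt setb
  simp only [Nat.testBit_or, Nat.one_shiftLeft, Nat.testBit_two_pow, Bool.or_eq_true,
    decide_eq_true_eq]
  constructor
  · rintro ((h | h) | h)
    · exact Or.inl h
    · right; left; omega
    · right; right; omega
  · rintro (h | ⟨rfl, rfl⟩ | ⟨rfl, rfl⟩)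
    · exact Or.inl (Or.inl h)
    · exact Or.inl (Or.inr rfl)
    · exact Or.inr rfl

/-- the combinatorial conclusion of the search -/
def Mdl (n : ℕ) (Q : ℕ → ℕ → Prop) : Prop :=
  ∃ m : List (ℕ × ℕ), m.length = 5 ∧
    (∀ x ∈ m, x.1 < n ∧ x.2 < n ∧ (x.1 = x.2 ∨ Q x.1 x.2)) ∧
    m.Pairwise (fun x y => Dj x y ∧ Lk Q x y)

theorem pwb_sound {n : ℕ} {e : ℕ → ℕ → Bool} {Q : ℕ → ℕ → Prop}
    (h : ∀ a < n, ∀ b < n, e a b = true → Q a b) :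
    ∀ m : List (ℕ × ℕ), (∀ x ∈ m, x.1 < n ∧ x.2 < n) → pwb e m = true →
      m.Pairwise (fun x y => Dj x y ∧ Lk Q x y) := by
  intro m
  induction m with
  | nil => intro _ _; exact List.Pairwise.nil
  | cons x xs ih =>
    intro hm hp
    simp only [pwb, Bool.and_eq_true, List.all_eq_true] at hp
    refine List.Pairwise.cons ?_ (ih (fun y hy => hm y (List.mem_cons_of_mem _ hy)) hp.2)
    intro y hy
    have h1 := hp.1 y hy
    have hx := hm x List.mem_cons_self
    have hy' := hm y (List.mem_cons_of_mem _ hy)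
    simp only [djb, lkb, Bool.and_eq_true, Bool.or_eq_true, bne_iff_ne] at h1
    refine ⟨⟨h1.1.1.1.1, h1.1.1.1.2, h1.1.1.2, h1.1.2⟩, ?_⟩
    rcases h1.2 with ((h2 | h2) | h2) | h2
    · exact Or.inl (h _ hx.1 _ hy'.1 h2)
    · exact Or.inr (Or.inl (h _ hx.1 _ hy'.2 h2))
    · exact Or.inr (Or.inr (Or.inl (h _ hx.2 _ hy'.1 h2)))
    · exact Or.inr (Or.inr (Or.inr (h _ hx.2 _ hy'.2 h2)))

theorem good_sound {n : ℕ} {e : ℕ → ℕ → Bool} {Q : ℕ → ℕ → Prop}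
    (h : ∀ a < n, ∀ b < n, e a b = true → Q a b) (m : List (ℕ × ℕ)) (hg : good n e m = true) :
    Mdl n Q := by
  simp only [good, Bool.and_eq_true, List.all_eq_true, beq_iff_eq, Bool.or_eq_true,
    Nat.blt_eq] at hg
  refine ⟨m, hg.1.1, fun x hx => ?_, pwb_sound h m (fun x hx => ?_) hg.2⟩
  · obtain ⟨⟨h1, h2⟩, h3⟩ := hg.1.2 x hx
    exact ⟨h1, h2, h3.imp id (h _ h1 _ h2)⟩
  · exact (hg.1.2 x hx).1

theorem full_sound {n N : ℕ} {A : ℕ → ℕ → Prop}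
    (hA : ∀ i < n, (List.range n).countP (fun j => decide (¬ A i j)) ≤ n - 4)
    (hN : ∀ a < n, ∀ b < n, bt N a b = true → ¬ A a b)
    {i j : ℕ} (hi : i < n) (hj : j < n) (hb : bt N i j = false) (hf : full n N i = true) :
    A i j := by
  by_contra hc
  have h1 := hA i hi
  simp only [full, decide_eq_true_eq] at hf
  have h2 : (List.range n).countP (fun j => bt N i j) <
      (List.range n).countP (fun j => decide (¬ A i j)) := by
    rw [List.countP_eq_length_filter, List.countP_eq_length_filter]
    have hs : ((List.range n).filter (fun j => bt N i j)).toFinset ⊂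
        ((List.range n).filter (fun j => decide (¬ A i j))).toFinset := by
      rw [Finset.ssubset_iff_of_subset]
      · refine ⟨j, ?_, ?_⟩
        · simp [hj, hc]
        · simp [hb]
      · intro k hk
        simp only [List.mem_toFinset, List.mem_filter, List.mem_range, decide_eq_true_eq] at hk ⊢
        exact ⟨hk.1, hN i hi k hk.1 hk.2⟩
    have := Finset.card_lt_card hs
    rwa [List.toFinset_card_of_nodup (List.nodup_range.filter _),
      List.toFinset_card_of_nodup (List.nodup_range.filter _)] at this
  omega

theorem chk_sound {n : ℕ} (hn : n ≤ 8) {A Q : ℕ → ℕ → Prop}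
    (hs : ∀ i j, A i j → A j i) (hAQ : ∀ i j, A i j → Q i j)
    (hA : ∀ i < n, (List.range n).countP (fun j => decide (¬ A i j)) ≤ n - 4) :
    ∀ (t : Tr) (E N : ℕ), (∀ a < n, ∀ b < n, bt E a b = true → Q a b) →
      (∀ a < n, ∀ b < n, bt N a b = true → ¬ A a b) →
      (∀ a < n, ∀ b < n, bt N a b = bt N b a) → chk n t E N = true → Mdl n Q := by
  intro t
  induction t with
  | m p q r s =>
    intro E N hE hN hNs h
    simp only [chk] at h
    refine good_sound ?_ _ h
    intro a ha b hb hf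
    simp only [frc, Bool.or_eq_true, Bool.and_eq_true, Bool.not_eq_true'] at hf
    rcases hf with hf | ⟨h1, h2 | h2⟩
    · exact hE a ha b hb hf
    · exact hAQ _ _ (full_sound hA hN ha hb h1 h2)
    · exact hAQ _ _ (hs _ _ (full_sound hA hN hb ha (by rw [← hNs a ha b hb]; exact h1) h2))
  | s i j t₁ t₂ ih₁ ih₂ =>
    intro E N hE hN hNs h
    simp only [chk, Bool.and_eq_true, Nat.blt_eq] at h
    obtain ⟨⟨hi, hj⟩, h1, h2⟩ := h
    by_cases hij : A i j
    · refine ih₁ _ _ ?_ hN hNs h1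
      intro a ha b hb hab
      rw [bt_setb (by omega) (by omega) (by omega) (by omega)] at hab
      rcases hab with hab | ⟨rfl, rfl⟩ | ⟨rfl, rfl⟩
      · exact hE a ha b hb hab
      · exact hAQ _ _ hij
      · exact hAQ _ _ (hs _ _ hij)
    · refine ih₂ _ _ hE ?_ ?_ h2
      · intro a ha b hb hab
        rw [bt_setb (by omega) (by omega) (by omega) (by omega)] at hab
        rcases hab with hab | ⟨rfl, rfl⟩ | ⟨rfl, rfl⟩
        · exact hN a ha b hb hab
        · exact hij
        · exact fun h => hij (hs _ _ h)
      · intro a ha b hb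
        rw [Bool.eq_iff_iff, bt_setb (by omega) (by omega) (by omega) (by omega),
          bt_setb (by omega) (by omega) (by omega) (by omega), hNs a ha b hb]
        tauto

/-- adjacency with the extra edge `01` -/
def ExtA (A : ℕ → ℕ → Prop) (i j : ℕ) : Prop := A i j ∨ (i = 0 ∧ j = 1) ∨ (i = 1 ∧ j = 0)

theorem mdl_of {n : ℕ} (hn : n = 6 ∨ n = 7) {A : ℕ → ℕ → Prop}
    (hs : ∀ i j, A i j → A j i) (hirr : ∀ i, ¬ A i i) (h01 : ¬ A 0 1)
    (hA : ∀ i < n, (List.range n).countP (fun j => decide (¬ A i j)) ≤ n - 4) :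
    Mdl n (ExtA A) := by
  have hE : ∀ a < n, ∀ b < n, bt (setb 0 0 1) a b = true → ExtA A a b := by
    intro a ha b hb h
    rw [bt_setb (by omega) (by omega) (by omega) (by omega)] at h
    rcases h with h | h | h
    · simp [bt] at h
    · exact Or.inr (Or.inl h)
    · exact Or.inr (Or.inr h)
  have key : ∀ a < n, ∀ b < n, bt (N0 n) a b = true → (a = b ∨ (a = 0 ∧ b = 1) ∨ (a = 1 ∧ b = 0)) := by
    rcases hn with rfl | rfl <;> decide +kernel
  have key2 : ∀ a < n, ∀ b < n, bt (N0 n) a b = bt (N0 n) b a := by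
    rcases hn with rfl | rfl <;> decide +kernel
  have hN : ∀ a < n, ∀ b < n, bt (N0 n) a b = true → ¬ A a b := by
    intro a ha b hb h
    rcases key a ha b hb h with rfl | ⟨rfl, rfl⟩ | ⟨rfl, rfl⟩
    · exact hirr _
    · exact h01
    · exact fun h => h01 (hs _ _ h)
  rcases hn with rfl | rfl
  · exact chk_sound (by norm_num) hs (fun _ _ => Or.inl) hA cert6 _ _ hE hN key2 cert6_ok
  · exact chk_sound (by norm_num) hs (fun _ _ => Or.inl) hA cert7 _ _ hE hN key2 cert7_ok


/-! ### Minors and links -/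

abbrev K6 {V : Type*} (G : SimpleGraph V) : Prop := HasMinor G (⊤ : SimpleGraph (Fin 6))

section

variable {V : Type*} {G : SimpleGraph V}

theorem conn_single (x : V) : (G.induce {x}).Connected := by
  rw [SimpleGraph.induce_singleton_eq_top]
  have : Nonempty ({x} : Set V) := ⟨⟨x, rfl⟩⟩
  exact SimpleGraph.connected_top

theorem conn_insert {C : Set V} (hC : (G.induce C).Connected) {x c : V} (hc : c ∈ C)
    (hx : G.Adj x c) : (G.induce (insert x C)).Connected := by
  have h := SimpleGraph.induce_union_connected
    (SimpleGraph.induce_pair_connected_of_adj hx).preconnected hC.preconnected ⟨c, by simp, hc⟩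
  have e : ({x, c} : Set V) ∪ C = insert x C := by
    ext y
    simp only [Set.mem_union, Set.mem_insert_iff, Set.mem_singleton_iff]
    constructor
    · rintro ((h | rfl) | h)
      · exact Or.inl h
      · exact Or.inr hc
      · exact Or.inr h
    · rintro (h | h)
      · exact Or.inl (Or.inl h)
      · exact Or.inr h
  rwa [e] at h

theorem conn_nonempty {C : Set V} (hC : (G.induce C).Connected) : C.Nonempty := by
  obtain ⟨x⟩ := hC.nonempty
  exact ⟨x.1, x.2⟩

theorem k6_cons (u : V) (S : Fin 5 → Set V) (hS : ∀ i, (G.induce (S i)).Connected)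
    (hu : ∀ i, u ∉ S i) (hadj : ∀ i, ∃ x ∈ S i, G.Adj u x)
    (hd : ∀ i j, i < j → Disjoint (S i) (S j))
    (hl : ∀ i j, i < j → ∃ x ∈ S i, ∃ y ∈ S j, G.Adj x y) : K6 G := by
  refine ⟨Fin.cons {u} S, ?_, ?_, ?_, ?_⟩
  · intro i
    refine Fin.cases ?_ (fun i => ?_) i
    · exact ⟨u, rfl⟩
    · exact conn_nonempty (hS i)
  · intro i j
    refine Fin.cases ?_ (fun i => ?_) i <;> refine Fin.cases ?_ (fun j => ?_) j
    · intro h; exact absurd rfl h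
    · intro _
      simpa using hu j
    · intro _
      simpa using hu i
    · intro h
      simp only [Fin.cons_succ]
      have h' : i ≠ j := fun e => h (by rw [e])
      rcases lt_or_gt_of_ne h' with h1 | h1
      · exact hd i j h1
      · exact (hd j i h1).symm
  · intro i
    refine Fin.cases ?_ (fun i => ?_) i
    · exact conn_single u
    · exact hS i
  · intro i j
    refine Fin.cases ?_ (fun i => ?_) i <;> refine Fin.cases ?_ (fun j => ?_) j
    · intro h; exact absurd h (SimpleGraph.irrefl _)
    · intro _
      obtain ⟨x, hx, h⟩ := hadj j
      exact ⟨u, rfl, x, hx, h⟩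
    · intro _
      obtain ⟨x, hx, h⟩ := hadj i
      exact ⟨x, hx, u, rfl, h.symm⟩
    · intro h
      have h' : i ≠ j := fun e => h.ne (by rw [e])
      rcases lt_or_gt_of_ne h' with h1 | h1
      · exact hl i j h1
      · obtain ⟨x, hx, y, hy, h⟩ := hl j i h1
        exact ⟨y, hy, x, hx, h.symm⟩

/-- a clique of size five in the neighbourhood of `u` gives `K₆` -/
theorem k6_of_clique (u : V) (s : Set V) (hs : 5 ≤ s.ncard) (hu : ∀ x ∈ s, G.Adj u x)
    (hc : ∀ x ∈ s, ∀ y ∈ s, x ≠ y → G.Adj x y) : K6 G := by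
  obtain ⟨t, hts, ht⟩ := Set.exists_subset_card_eq hs
  have hfin : t.Finite := Set.finite_of_ncard_ne_zero (by omega)
  have := hfin.fintype
  have hcard : Fintype.card t = 5 := by rw [← Nat.card_eq_fintype_card]; exact ht
  let e : Fin 5 ≃ t := (Fintype.equivFinOfCardEq hcard).symm
  have hne : ∀ i j, i < j → (e i : V) ≠ e j := fun i j hij h =>
    hij.ne (e.injective (Subtype.ext h))
  refine k6_cons u (fun i => {(e i : V)}) (fun i => conn_single _) ?_ ?_ ?_ ?_
  · intro i h
    have := hu _ (hts (e i).2)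
    rw [← Set.mem_singleton_iff.1 h] at this
    exact G.irrefl this
  · intro i
    exact ⟨_, rfl, hu _ (hts (e i).2)⟩
  · intro i j hij
    simpa using hne i j hij
  · intro i j hij
    exact ⟨_, rfl, _, rfl, hc _ (hts (e i).2) _ (hts (e j).2) (hne i j hij)⟩

theorem k6_of_mdl {n : ℕ} (u : V) (v : ℕ → V) (hv : ∀ i < n, G.Adj u (v i))
    (hinj : ∀ i < n, ∀ j < n, v i = v j → i = j)
    (C : Set V) (hC : (G.induce C).Connected) (hCu : ∀ c ∈ C, c ≠ u ∧ ¬ G.Adj u c)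
    (h0 : ∃ c ∈ C, G.Adj (v 0) c) (h1 : ∃ c ∈ C, G.Adj (v 1) c)
    (hm : Mdl n (ExtA fun i j => G.Adj (v i) (v j))) : K6 G := by
  obtain ⟨m, hlen, hm1, hm2⟩ := hm
  let S : ℕ × ℕ → Set V := fun x => {v x.1, v x.2} ∪ {c | c ∈ C ∧ (x.1 = 0 ∨ x.2 = 0)}
  obtain ⟨c0, hc0, ha0⟩ := h0
  obtain ⟨c1, hc1, ha1⟩ := h1
  have hvC : ∀ i < n, v i ∉ C := fun i hi h => (hCu _ h).2 (hv i hi)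
  let f : Fin 5 → ℕ × ℕ := fun i => m.get (i.cast hlen.symm)
  have hf : ∀ i, f i ∈ m := fun i => List.get_mem _ _
  have hpw : ∀ i j, i < j → Dj (f i) (f j) ∧
      Lk (ExtA fun i j => G.Adj (v i) (v j)) (f i) (f j) := by
    intro i j hij
    exact List.pairwise_iff_get.1 hm2 _ _ hij
  have hconn : ∀ x ∈ m, (G.induce (S x)).Connected := by
    intro x hx
    obtain ⟨hx1, hx2, hx3⟩ := hm1 x hx
    by_cases hz : x.1 = 0 ∨ x.2 = 0
    · have e : S x = insert (v x.1) (insert (v x.2) C) := by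
        ext y
        simp only [S, hz, Set.mem_union, Set.mem_insert_iff, Set.mem_singleton_iff,
          Set.mem_ofPred_eq, and_true, or_assoc]
      rw [e]
      -- at least one of them is attached to `C`
      have hQ : x.1 = x.2 ∨ G.Adj (v x.1) (v x.2) ∨
          ((∃ c ∈ C, G.Adj (v x.1) c) ∧ ∃ c ∈ C, G.Adj (v x.2) c) := by
        rcases hx3 with h | h | ⟨h, h'⟩ | ⟨h, h'⟩
        · exact Or.inl h
        · exact Or.inr (Or.inl h)
        · rw [h, h']; exact Or.inr (Or.inr ⟨⟨c0, hc0, ha0⟩, c1, hc1, ha1⟩)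
        · rw [h, h']; exact Or.inr (Or.inr ⟨⟨c1, hc1, ha1⟩, c0, hc0, ha0⟩)
      rcases hQ with h | h | ⟨⟨c, hc, h⟩, c', hc', h'⟩
      · have : x.2 = 0 := by rcases hz with h' | h' <;> omega
        rw [h, this, Set.insert_idem]
        exact conn_insert hC hc0 ha0
      · rcases hz with hz | hz
        · rw [Set.insert_comm]
          refine conn_insert (conn_insert hC hc0 (hz ▸ ha0)) (Set.mem_insert _ _) h.symm
        · exact conn_insert (conn_insert hC hc0 (hz ▸ ha0)) (Set.mem_insert _ _) h
      · exact conn_insert (conn_insert hC hc' h') (Set.mem_insert_of_mem _ hc) h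
    · have e : S x = {v x.1, v x.2} := by
        ext y
        simp only [S, hz, Set.mem_union, Set.mem_ofPred_eq, and_false, or_false]
      rw [e]
      push Not at hz
      rcases hx3 with h | h | h | h
      · rw [h, Set.pair_eq_singleton]; exact conn_single _
      · exact SimpleGraph.induce_pair_connected_of_adj h
      · exact absurd h.1 hz.1
      · exact absurd h.2 hz.2
  refine k6_cons u (fun i => S (f i)) (fun i => hconn _ (hf i)) ?_ ?_ ?_ ?_
  · intro i h
    obtain ⟨hx1, hx2, -⟩ := hm1 _ (hf i)
    rcases h with (h | h) | h
    · exact (hv _ hx1).ne h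
    · exact (hv _ hx2).ne h
    · exact (hCu _ h.1).1 rfl
  · intro i
    exact ⟨v (f i).1, Or.inl (Or.inl rfl), hv _ (hm1 _ (hf i)).1⟩
  · intro i j hij
    obtain ⟨hx1, hx2, -⟩ := hm1 _ (hf i)
    obtain ⟨hy1, hy2, -⟩ := hm1 _ (hf j)
    obtain ⟨⟨d1, d2, d3, d4⟩, -⟩ := hpw i j hij
    rw [Set.disjoint_left]
    rintro y ((h | h) | h) ((h' | h') | h')
    · exact d1 (hinj _ hx1 _ hy1 (h.symm.trans h'))
    · exact d2 (hinj _ hx1 _ hy2 (h.symm.trans h'))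
    · rw [h] at h'; exact hvC _ hx1 h'.1
    · exact d3 (hinj _ hx2 _ hy1 (h.symm.trans h'))
    · exact d4 (hinj _ hx2 _ hy2 (h.symm.trans h'))
    · rw [Set.mem_singleton_iff.1 h] at h'; exact hvC _ hx2 h'.1
    · rw [h'] at h; exact hvC _ hy1 h.1
    · rw [Set.mem_singleton_iff.1 h'] at h; exact hvC _ hy2 h.1
    · have := h.2
      have := h'.2
      omega
  · intro i j hij
    have key : ∀ a b, (a = (f i).1 ∨ a = (f i).2) → (b = (f j).1 ∨ b = (f j).2) →
        ExtA (fun i j => G.Adj (v i) (v j)) a b → ∃ x ∈ S (f i), ∃ y ∈ S (f j), G.Adj x y := by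
      intro a b ha hb hab
      have hva : v a ∈ S (f i) := by
        rcases ha with rfl | rfl
        · exact Or.inl (Or.inl rfl)
        · exact Or.inl (Or.inr rfl)
      have hvb : v b ∈ S (f j) := by
        rcases hb with rfl | rfl
        · exact Or.inl (Or.inl rfl)
        · exact Or.inl (Or.inr rfl)
      rcases hab with h | ⟨rfl, rfl⟩ | ⟨rfl, rfl⟩
      · exact ⟨_, hva, _, hvb, h⟩
      · exact ⟨c1, Or.inr ⟨hc1, by omega⟩, _, hvb, ha1.symm⟩
      · exact ⟨_, hva, c1, Or.inr ⟨hc1, by omega⟩, ha1⟩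
    rcases (hpw i j hij).2 with h | h | h | h
    · exact key _ _ (Or.inl rfl) (Or.inl rfl) h
    · exact key _ _ (Or.inl rfl) (Or.inr rfl) h
    · exact key _ _ (Or.inr rfl) (Or.inl rfl) h
    · exact key _ _ (Or.inr rfl) (Or.inr rfl) h

theorem k6_of_link [Fintype V] (u : V) (C : Set V) (hC : (G.induce C).Connected)
    (hCu : ∀ c ∈ C, c ≠ u ∧ ¬ G.Adj u c) (a b : V) (hua : G.Adj u a) (hub : G.Adj u b)
    (hab : a ≠ b) (hnab : ¬ G.Adj a b) (hac : ∃ c ∈ C, G.Adj a c) (hbc : ∃ c ∈ C, G.Adj b c)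
    (hcard : (G.neighborSet u).ncard ≤ 7)
    (htri : ∀ w, G.Adj u w → 4 ≤ (G.neighborSet u ∩ G.neighborSet w).ncard) : K6 G := by
  let N : Finset V := Finset.univ.filter (fun x => G.Adj u x)
  have hNcard : N.card ≤ 7 := by
    have : (G.neighborSet u) = ((N : Finset V) : Set V) := by ext x; simp [N]
    rwa [this, Set.ncard_coe_finset] at hcard
  have htri' : ∀ w, G.Adj u w → 4 ≤ (N.filter (fun x => G.Adj w x)).card := by
    intro w hw
    have : (G.neighborSet u ∩ G.neighborSet w) =
        ((N.filter (fun x => G.Adj w x) : Finset V) : Set V) := by ext x; simp [N]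
    have h := htri w hw
    rwa [this, Set.ncard_coe_finset] at h
  have haN : a ∈ N := by simp [N, hua]
  have hbN : b ∈ N := by simp [N, hub]
  have hbN' : b ∈ N.erase a := Finset.mem_erase.2 ⟨hab.symm, hbN⟩
  have h6 : 6 ≤ N.card := by
    have h1 := htri' a hua
    have h2 : N.filter (fun x => G.Adj a x) ⊆ (N.erase a).erase b := by
      intro x hx
      rw [Finset.mem_filter] at hx
      refine Finset.mem_erase.2 ⟨?_, Finset.mem_erase.2 ⟨?_, hx.1⟩⟩
      · rintro rfl; exact hnab hx.2
      · rintro rfl; exact G.irrefl hx.2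
    have h3 := Finset.card_le_card h2
    rw [Finset.card_erase_of_mem hbN', Finset.card_erase_of_mem haN] at h3
    omega
  let l : List V := a :: b :: ((N.erase a).erase b).toList
  have hnd : l.Nodup := by
    simp [l, hab, Finset.nodup_toList]
  have hlN : l.toFinset = N := by
    ext x
    simp only [l, List.toFinset_cons, Finset.toList_toFinset]
    rw [Finset.insert_erase hbN', Finset.insert_erase haN]
  have hlen : l.length = N.card := by rw [← hlN, List.toFinset_card_of_nodup hnd]
  let v : ℕ → V := fun i => l.getD i u
  have hmap : (List.range N.card).map v = l := by
    rw [← hlen]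
    apply List.ext_getElem
    · simp
    · intro i h1 h2
      simp [v, h2]
  have hvN : ∀ i < N.card, G.Adj u (v i) := by
    intro i hi
    have : v i ∈ l.toFinset := by
      rw [List.mem_toFinset, ← hmap]
      exact List.mem_map_of_mem (List.mem_range.2 hi)
    rw [hlN] at this
    simpa [N] using this
  have hinj : ∀ i < N.card, ∀ j < N.card, v i = v j → i = j := by
    intro i hi j hj h
    have h2 : ((List.range N.card).map v).Nodup := by rw [hmap]; exact hnd
    exact List.inj_on_of_nodup_map h2 (List.mem_range.2 hi) (List.mem_range.2 hj) h
  refine k6_of_mdl (n := N.card) u v hvN hinj C hC hCu hac hbc ?_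
  refine mdl_of (by omega) (fun i j h => h.symm) (fun i => G.irrefl) hnab ?_
  intro i hi
  have h1 := htri' (v i) (hvN i hi)
  have h2 : (List.range N.card).countP (fun j => decide (G.Adj (v i) (v j))) =
      (N.filter (fun x => G.Adj (v i) x)).card := by
    have e1 : N.filter (fun x => G.Adj (v i) x) =
        (l.filter (fun x => decide (G.Adj (v i) x))).toFinset := by
      ext x
      rw [← hlN]
      simp only [Finset.mem_filter, List.mem_toFinset, List.mem_filter, decide_eq_true_eq]
    have e2 : (List.range N.card).countP (fun j => decide (G.Adj (v i) (v j))) =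
        l.countP (fun x => decide (G.Adj (v i) x)) := by
      rw [← hmap, List.countP_map]
      rfl
    rw [e1, e2, List.toFinset_card_of_nodup (hnd.filter _), List.countP_eq_length_filter]
  have h3 := List.length_eq_countP_add_countP (l := List.range N.card)
    (fun j => decide (G.Adj (v i) (v j)))
  rw [List.length_range, h2] at h3
  have h4 : (List.range N.card).countP (fun j => decide (¬ G.Adj (v i) (v j))) =
    (List.range N.card).countP (fun j => decide (¬ (decide (G.Adj (v i) (v j)) = true))) := by
    congr 1; ext j; simp
  rw [h4]
  omega

end


/-! ### Low degree vertices yield clique sums -/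

/-- `G` is a clique sum over some `K_l` with `l ≤ 4`. -/
def CS {V : Type*} (G : SimpleGraph V) : Prop :=
  ∃ (l : ℕ) (V₁ V₂ : Set V), l ≤ 4 ∧
        V₁ ∪ V₂ = Set.univ ∧
        (V₁ \ V₂).Nonempty ∧ (V₂ \ V₁).Nonempty ∧
        (∀ x ∈ V₁ \ V₂, ∀ y ∈ V₂ \ V₁, ¬ G.Adj x y) ∧
        (V₁ ∩ V₂).ncard = l ∧
        (∀ x ∈ V₁ ∩ V₂, ∀ y ∈ V₁ ∩ V₂, x ≠ y → G.Adj x y)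

section

variable {V : Type*} {G : SimpleGraph V} [Fintype V]

theorem cs_of_nondominating (u w : V) (hwu : w ≠ u) (huw : ¬ G.Adj u w)
    (hcard : (G.neighborSet u).ncard ≤ 7)
    (htri : ∀ w, G.Adj u w → 4 ≤ (G.neighborSet u ∩ G.neighborSet w).ncard) :
    K6 G ∨ CS G := by
  by_cases hK : K6 G
  · exact Or.inl hK
  right
  let P : Set V → Prop := fun C => w ∈ C ∧ (G.induce C).Connected ∧
    ∀ c ∈ C, c ≠ u ∧ ¬ G.Adj u c
  have hP : P {w} := ⟨rfl, conn_single w, by rintro c rfl; exact ⟨hwu, huw⟩⟩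
  obtain ⟨C, hPC, hmax⟩ := (Set.toFinite {C | P C}).exists_maximal ⟨_, hP⟩
  obtain ⟨hwC, hC, hCu⟩ := hPC
  have hout : ∀ c ∈ C, ∀ y, y ∉ C → G.Adj c y → G.Adj u y := by
    intro c hc y hy hcy
    by_contra hn
    have hyu : y ≠ u := by
      rintro rfl
      exact (hCu c hc).2 hcy.symm
    have : P (insert y C) := by
      refine ⟨Set.mem_insert_of_mem _ hwC, conn_insert hC hc hcy.symm, ?_⟩
      rintro z (rfl | hz)
      · exact ⟨hyu, hn⟩
      · exact hCu z hz
    exact hy (hmax this (Set.subset_insert _ _) (Set.mem_insert _ _))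
  let D : Set V := {x | G.Adj u x ∧ ∃ c ∈ C, G.Adj x c}
  have hDC : ∀ x ∈ D, x ∉ C := fun x hx h => (hCu x h).2 hx.1
  have hDclique : ∀ x ∈ D, ∀ y ∈ D, x ≠ y → G.Adj x y := by
    intro x hx y hy hxy
    by_contra hn
    exact hK (k6_of_link u C hC hCu x y hx.1 hy.1 hxy hn hx.2 hy.2 hcard htri)
  have hCDeq : (C ∪ D) ∩ Cᶜ = D := by
    ext x
    constructor
    · rintro ⟨h | h, h'⟩
      · exact absurd h h'
      · exact h
    · intro h
      exact ⟨Or.inr h, hDC x h⟩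
  refine ⟨D.ncard, C ∪ D, Cᶜ, ?_, ?_, ?_, ?_, ?_, ?_, ?_⟩
  · by_contra hn
    exact hK (k6_of_clique u D (by omega) (fun x hx => hx.1) hDclique)
  · ext x
    by_cases hx : x ∈ C <;> simp [hx]
  · exact ⟨w, Or.inl hwC, fun h => h hwC⟩
  · refine ⟨u, fun h => (hCu u h).1 rfl, ?_⟩
    rintro (h | h)
    · exact (hCu u h).1 rfl
    · exact G.irrefl h.1
  · rintro x ⟨-, hx⟩ y ⟨hy, hy'⟩ hxy
    have hx : x ∈ C := not_not.1 hx
    exact hy' (Or.inr ⟨hout x hx y hy hxy, x, hx, hxy.symm⟩)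
  · rw [hCDeq]
  · rw [hCDeq]; exact hDclique

theorem cs_of_low_degree (hne : ∃ x y, G.Adj x y)
    (htri : ∀ v u : V, G.Adj v u → 4 ≤ (G.neighborSet v ∩ G.neighborSet u).ncard)
    (hu : ∃ u, (G.neighborSet u).ncard ≤ 7) : K6 G ∨ CS G := by
  obtain ⟨u, hu⟩ := hu
  by_cases hd : ∃ w, w ≠ u ∧ ¬ G.Adj u w
  · obtain ⟨w, h1, h2⟩ := hd
    exact cs_of_nondominating u w h1 h2 hu (htri u)
  push Not at hd
  have hV : (Set.univ : Set V).ncard ≤ 8 := by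
    have : (Set.univ : Set V) = insert u (G.neighborSet u) := by
      ext x
      by_cases hx : x = u
      · simp [hx]
      · simp [hx, hd x hx]
    rw [this]
    exact (Set.ncard_insert_le _ _).trans (by omega)
  have hdeg : ∀ v, (G.neighborSet v).ncard ≤ 7 := by
    intro v
    have h1 : insert v (G.neighborSet v) ⊆ (Set.univ : Set V) := Set.subset_univ _
    have h2 := Set.ncard_le_ncard h1
    rw [Set.ncard_insert_of_notMem (by simp)] at h2
    omega
  by_cases hd2 : ∃ v w, w ≠ v ∧ ¬ G.Adj v w
  · obtain ⟨v, w, h1, h2⟩ := hd2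
    exact cs_of_nondominating v w h1 h2 (hdeg v) (htri v)
  push Not at hd2
  left
  obtain ⟨x, y, hxy⟩ := hne
  have h1 : insert y (G.neighborSet x ∩ G.neighborSet y) ⊆ G.neighborSet x := by
    rintro z (rfl | h)
    · exact hxy
    · exact h.1
  have h2 := Set.ncard_le_ncard h1
  rw [Set.ncard_insert_of_notMem (by simp)] at h2
  have h3 := htri x y hxy
  exact k6_of_clique x (G.neighborSet x) (by omega) (fun z hz => hz)
    (fun z _ z' _ h => hd2 z z' h.symm)

end

/-! ### Minor operations -/

theorem k6_of_hom {V W : Type*} {G : SimpleGraph V} {H : SimpleGraph W} (f : G →g H)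
    (hf : Function.Injective f) (h : K6 G) : K6 H := by
  obtain ⟨B, h1, h2, h3, h4⟩ := h
  refine ⟨fun i => f '' B i, fun i => (h1 i).image f, ?_, ?_, ?_⟩
  · intro i j hij
    exact (Set.disjoint_image_iff hf).2 (h2 i j hij)
  · intro i
    let g : G.induce (B i) →g H.induce (f '' B i) :=
      { toFun := fun x => ⟨f x.1, x.1, x.2, rfl⟩
        map_rel' := fun {a b} hab => f.map_rel hab }
    refine SimpleGraph.Connected.map g ?_ (h3 i)
    rintro ⟨_, x, hx, rfl⟩
    exact ⟨⟨x, hx⟩, rfl⟩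
  · intro i j hij
    obtain ⟨x, hx, y, hy, hxy⟩ := h4 i j hij
    exact ⟨f x, ⟨x, hx, rfl⟩, f y, ⟨y, hy, rfl⟩, f.map_rel hxy⟩

theorem k6_mono {V : Type*} {G H : SimpleGraph V} (hGH : G ≤ H) (h : K6 G) : K6 H :=
  k6_of_hom (SimpleGraph.Hom.ofLE hGH) Function.injective_id h

theorem k6_induce {V : Type*} {G : SimpleGraph V} (s : Set V) (h : K6 (G.induce s)) : K6 G :=
  k6_of_hom (SimpleGraph.Embedding.induce s).toHom Subtype.val_injective h

/-- `G` with all edges from `u` to neighbours of `v` added -/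
def addN {V : Type*} (G : SimpleGraph V) (u v : V) : SimpleGraph V :=
  SimpleGraph.fromRel (fun x y => G.Adj x y ∨ (x = u ∧ G.Adj v y))

theorem addN_adj {V : Type*} {G : SimpleGraph V} {u v x y : V} : (addN G u v).Adj x y ↔
    x ≠ y ∧ (G.Adj x y ∨ (x = u ∧ G.Adj v y) ∨ (y = u ∧ G.Adj v x)) := by
  unfold addN
  rw [SimpleGraph.fromRel_adj, G.adj_comm y x]
  tauto

theorem k6_contract {V : Type*} {G : SimpleGraph V} {u v : V} (huv : G.Adj u v)
    (h : K6 ((addN G u v).induce {v}ᶜ)) : K6 G := by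
  obtain ⟨B, h1, h2, h3, h4⟩ := h
  let S : Fin 6 → Set V := fun i =>
    {x | (∃ h : x ∈ ({v}ᶜ : Set V), (⟨x, h⟩ : ({v}ᶜ : Set V)) ∈ B i) ∨
      (x = v ∧ (⟨u, huv.ne⟩ : ({v}ᶜ : Set V)) ∈ B i)}
  have hmem : ∀ i (x : ({v}ᶜ : Set V)), x ∈ B i → x.1 ∈ S i := fun i x hx => Or.inl ⟨x.2, hx⟩
  refine ⟨S, ?_, ?_, ?_, ?_⟩
  · intro i
    obtain ⟨x, hx⟩ := h1 i
    exact ⟨x.1, hmem i x hx⟩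
  · intro i j hij
    have hd := Set.disjoint_left.1 (h2 i j hij)
    rw [Set.disjoint_left]
    rintro x (⟨hx, h⟩ | ⟨rfl, h⟩) (⟨hx', h'⟩ | ⟨h'', h'⟩)
    · exact hd h h'
    · exact hx h''
    · exact hx' rfl
    · exact hd h h'
  · intro i
    have hadj : ∀ x y : S i, G.Adj x.1 y.1 → (G.induce (S i)).Reachable x y :=
      fun x y h => SimpleGraph.Adj.reachable (G := G.induce (S i)) h
    have hstep : ∀ x y (hx : x ∈ B i) (hy : y ∈ B i), (addN G u v).Adj x.1 y.1 →
        (G.induce (S i)).Reachable ⟨x.1, hmem i x hx⟩ ⟨y.1, hmem i y hy⟩ := by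
      intro x y hx hy hxy
      rw [addN_adj] at hxy
      rcases hxy.2 with h | ⟨h, h'⟩ | ⟨h, h'⟩
      · exact hadj _ _ h
      · have hv : v ∈ S i := Or.inr ⟨rfl, by
          have : x = ⟨u, huv.ne⟩ := Subtype.ext h
          rwa [← this]⟩
        have e1 : (G.induce (S i)).Reachable ⟨x.1, hmem i x hx⟩ ⟨v, hv⟩ :=
          hadj _ _ (by show G.Adj x.1 v; rw [h]; exact huv)
        exact e1.trans (hadj _ _ h')
      · have hv : v ∈ S i := Or.inr ⟨rfl, by
          have : y = ⟨u, huv.ne⟩ := Subtype.ext h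
          rwa [← this]⟩
        have e1 : (G.induce (S i)).Reachable ⟨v, hv⟩ ⟨y.1, hmem i y hy⟩ :=
          hadj _ _ (by show G.Adj v y.1; rw [h]; exact huv.symm)
        exact (hadj ⟨x.1, hmem i x hx⟩ ⟨v, hv⟩ h'.symm).trans e1
    have hreach : ∀ x y : B i, (((addN G u v).induce {v}ᶜ).induce (B i)).Reachable x y →
        (G.induce (S i)).Reachable ⟨x.1.1, hmem i x.1 x.2⟩ ⟨y.1.1, hmem i y.1 y.2⟩ := by
      rintro x y ⟨p⟩
      induction p with
      | nil => exact SimpleGraph.Reachable.refl _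
      | @cons a b c h p ih => exact (hstep a.1 b.1 a.2 b.2 h).trans ih
    obtain ⟨x0, hx0⟩ := h1 i
    rw [SimpleGraph.connected_iff_exists_forall_reachable]
    refine ⟨⟨x0.1, hmem i x0 hx0⟩, ?_⟩
    rintro ⟨y, ⟨hy, hyB⟩ | ⟨rfl, hyB⟩⟩
    · exact hreach ⟨x0, hx0⟩ ⟨⟨y, hy⟩, hyB⟩ ((h3 i).preconnected _ _)
    · have e1 := hreach ⟨x0, hx0⟩ ⟨_, hyB⟩ ((h3 i).preconnected _ _)
      exact e1.trans (hadj _ _ huv)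
  · intro i j hij
    obtain ⟨x, hx, y, hy, hxy⟩ := h4 i j hij
    have hxy : (addN G u v).Adj x.1 y.1 := hxy
    rw [addN_adj] at hxy
    rcases hxy.2 with h | ⟨h, h'⟩ | ⟨h, h'⟩
    · exact ⟨x.1, hmem i x hx, y.1, hmem j y hy, h⟩
    · refine ⟨v, Or.inr ⟨rfl, ?_⟩, y.1, hmem j y hy, h'⟩
      have : x = ⟨u, huv.ne⟩ := Subtype.ext h
      rwa [← this]
    · refine ⟨x.1, hmem i x hx, v, Or.inr ⟨rfl, ?_⟩, h'.symm⟩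
      have : y = ⟨u, huv.ne⟩ := Subtype.ext h
      rwa [← this]


/-! ### Edge counting -/

section

variable {V : Type*} [Fintype V] {G : SimpleGraph V}

/-- edges of `G` inside `s` -/
def es (G : SimpleGraph V) (s : Set V) : Set (Sym2 V) := {e | e ∈ G.edgeSet ∧ ∀ x ∈ e, x ∈ s}

theorem ncard_induce (s : Set V) : (G.induce s).edgeSet.ncard = (es G s).ncard := by
  have : es G s = Sym2.map (Subtype.val : s → V) '' (G.induce s).edgeSet := by
    ext e
    induction e using Sym2.ind with
    | _ x y =>
      constructor
      · rintro ⟨h, h'⟩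
        exact ⟨s(⟨x, h' x (Sym2.mem_mk_left _ _)⟩, ⟨y, h' y (Sym2.mem_mk_right _ _)⟩), h, rfl⟩
      · rintro ⟨e', he', h⟩
        induction e' using Sym2.ind with
        | _ a b =>
          rw [← h]
          refine ⟨he', ?_⟩
          intro z hz
          rw [Sym2.map_mk, Sym2.mem_iff] at hz
          rcases hz with rfl | rfl
          · exact a.2
          · exact b.2
  rw [this, Set.ncard_image_of_injective _ (Sym2.map.injective Subtype.val_injective)]

theorem mk_inj (u : V) : Function.Injective (fun y => s(u, y)) := by
  intro a b h
  exact Sym2.congr_right.1 h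

theorem ncard_delete (v : V) : G.edgeSet.ncard =
    (G.induce {v}ᶜ).edgeSet.ncard + (G.neighborSet v).ncard := by
  rw [ncard_induce, ← Set.ncard_image_of_injective (G.neighborSet v) (mk_inj v),
    ← Set.ncard_union_eq]
  · congr 1
    ext e
    constructor
    · intro he
      by_cases hv : v ∈ e
      · right
        obtain ⟨y, rfl⟩ := hv
        exact ⟨y, he, rfl⟩
      · left
        refine ⟨he, fun x hx h => hv ?_⟩
        rwa [← Set.mem_singleton_iff.1 h]
    · rintro (h | ⟨y, hy, rfl⟩)
      · exact h.1
      · exact hy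
  · rw [Set.disjoint_left]
    rintro e he ⟨y, hy, rfl⟩
    exact he.2 v (Sym2.mem_mk_left _ _) rfl

theorem ncard_contract {u v : V} (huv : G.Adj u v) : G.edgeSet.ncard ≤
    ((addN G u v).induce {v}ᶜ).edgeSet.ncard + (G.neighborSet u ∩ G.neighborSet v).ncard + 1 := by
  have h1 := ncard_delete (G := addN G u v) v
  have h2 : (addN G u v).neighborSet v = G.neighborSet v := by
    ext y
    simp only [SimpleGraph.mem_neighborSet, addN_adj]
    constructor
    · rintro ⟨-, h | ⟨h, -⟩ | ⟨-, h⟩⟩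
      · exact h
      · exact absurd h.symm huv.ne
      · exact absurd h (G.irrefl)
    · intro h
      exact ⟨h.ne, Or.inl h⟩
  rw [h2] at h1
  let T : Set V := (G.neighborSet v \ G.neighborSet u) \ {u}
  have h3 : G.edgeSet ∪ (fun y => s(u, y)) '' T ⊆ (addN G u v).edgeSet := by
    rintro e (he | ⟨y, hy, rfl⟩)
    · induction e using Sym2.ind with
      | _ x y =>
        rw [SimpleGraph.mem_edgeSet] at he ⊢
        exact addN_adj.2 ⟨he.ne, Or.inl he⟩
    · rw [SimpleGraph.mem_edgeSet]
      exact addN_adj.2 ⟨fun h => hy.2 h.symm, Or.inr (Or.inl ⟨rfl, hy.1.1⟩)⟩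
  have h4 := Set.ncard_le_ncard h3
  rw [Set.ncard_union_eq, Set.ncard_image_of_injective _ (mk_inj u)] at h4
  · have h5 := Set.ncard_inter_add_ncard_sdiff_eq_ncard (G.neighborSet v) (G.neighborSet u)
    have h6 : (G.neighborSet v \ G.neighborSet u).ncard ≤ T.ncard + 1 := by
      have := Set.ncard_le_ncard_sdiff_add_ncard (G.neighborSet v \ G.neighborSet u) {u}
      rwa [Set.ncard_singleton] at this
    rw [Set.inter_comm] at h5
    omega
  · rw [Set.disjoint_left]
    rintro e he ⟨y, hy, rfl⟩
    exact hy.1.2 he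

theorem ncard_cliqueSum {V₁ V₂ : Set V} (hU : V₁ ∪ V₂ = Set.univ)
    (hno : ∀ x ∈ V₁ \ V₂, ∀ y ∈ V₂ \ V₁, ¬ G.Adj x y)
    (hcl : ∀ x ∈ V₁ ∩ V₂, ∀ y ∈ V₁ ∩ V₂, x ≠ y → G.Adj x y) :
    G.edgeSet.ncard + (V₁ ∩ V₂).ncard.choose 2 =
      (G.induce V₁).edgeSet.ncard + (G.induce V₂).edgeSet.ncard := by
  rw [ncard_induce, ncard_induce, ← Set.ncard_union_add_ncard_inter]
  have h1 : es G V₁ ∪ es G V₂ = G.edgeSet := by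
    ext e
    constructor
    · rintro (h | h) <;> exact h.1
    · intro he
      induction e using Sym2.ind with
      | _ x y =>
        have hx : x ∈ V₁ ∪ V₂ := hU ▸ Set.mem_univ x
        have hy : y ∈ V₁ ∪ V₂ := hU ▸ Set.mem_univ y
        have a1 := hno x
        have a2 := hno y
        have he' : G.Adj x y := he
        have he'' := he'.symm
        simp only [Set.mem_union, es, Set.mem_ofPred_eq, Sym2.mem_iff, forall_eq_or_imp, forall_eq,
          he, true_and, Set.mem_sdiff] at *
        by_cases b1 : x ∈ V₁ <;> by_cases b2 : x ∈ V₂ <;> by_cases b3 : y ∈ V₁ <;>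
          by_cases b4 : y ∈ V₂ <;> simp_all
  have h2 : es G V₁ ∩ es G V₂ = es G (V₁ ∩ V₂) := by
    ext e
    constructor
    · rintro ⟨h, h'⟩
      exact ⟨h.1, fun x hx => ⟨h.2 x hx, h'.2 x hx⟩⟩
    · rintro ⟨h, h'⟩
      exact ⟨⟨h, fun x hx => (h' x hx).1⟩, ⟨h, fun x hx => (h' x hx).2⟩⟩
  have h3 : G.induce (V₁ ∩ V₂) = ⊤ := by
    ext x y
    rw [SimpleGraph.top_adj]
    constructor
    · intro h; exact h.ne
    · intro h; exact hcl x x.2 y y.2 (fun e => h (Subtype.ext e))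
  rw [h1, h2, ← ncard_induce, h3]
  congr 1
  rw [← Nat.card_coe_set_eq (V₁ ∩ V₂), Nat.card_eq_fintype_card,
    ← SimpleGraph.card_edgeFinset_top_eq_card_choose_two,
    Set.ncard_eq_toFinset_card' (SimpleGraph.edgeSet _)]
  unfold SimpleGraph.edgeFinset
  congr!

theorem sum_deg : ∑ v, (G.neighborSet v).ncard = 2 * G.edgeSet.ncard := by
  have h := G.sum_degrees_eq_twice_card_edges
  rw [Set.ncard_eq_toFinset_card']
  unfold SimpleGraph.edgeFinset at h
  convert h using 2 with v
  rw [Set.ncard_eq_toFinset_card', SimpleGraph.degree, SimpleGraph.neighborFinset]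

theorem ncard_edge_le : G.edgeSet.ncard ≤ (Fintype.card V).choose 2 := by
  rw [Set.ncard_eq_toFinset_card']
  exact G.card_edgeFinset_le_card_choose_two

end

universe w

theorem mader (n : ℕ) : ∀ (V : Type w) [Fintype V] (G : SimpleGraph V), Fintype.card V = n →
    4 ≤ n → 4 * n ≤ G.edgeSet.ncard + 9 → K6 G := by
  induction n using Nat.strong_induction_on with
  | _ n ih =>
  intro V _ G₀ hV hn hG₀
  -- reduce to exactly `4 n - 9` edges
  obtain ⟨t, htG, ht⟩ := Set.exists_subset_card_eq (s := G₀.edgeSet) (n := 4 * n - 9) (by omega)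
  let G : SimpleGraph V := SimpleGraph.fromEdgeSet t
  have hle : G ≤ G₀ := by
    intro x y h
    exact htG ((SimpleGraph.fromEdgeSet_adj t).1 h).1
  have hGe : G.edgeSet = t := by
    rw [SimpleGraph.edgeSet_fromEdgeSet]
    ext e
    constructor
    · exact fun h => h.1
    · intro h
      exact ⟨h, G₀.not_isDiag_of_mem_edgeSet (htG h)⟩
  refine k6_mono hle ?_
  have he : G.edgeSet.ncard + 9 = 4 * n := by rw [hGe, ht]; omega
  clear_value G
  have hn6 : 6 ≤ n := by
    by_contra hc
    have h := ncard_edge_le (G := G)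
    rw [hV] at h
    have : n = 4 ∨ n = 5 := by omega
    rcases this with rfl | rfl
    · have : Nat.choose 4 2 = 6 := rfl
      omega
    · have : Nat.choose 5 2 = 10 := rfl
      omega
  have hcompl : ∀ v : V, Fintype.card ({v}ᶜ : Set V) = n - 1 := by
    intro v
    rw [Fintype.card_compl_set, hV]
    simp
  by_cases hdeg : ∃ v, (G.neighborSet v).ncard ≤ 4
  · obtain ⟨v, hv⟩ := hdeg
    have h := ncard_delete (G := G) v
    exact k6_induce _ (ih (n - 1) (by omega) _ _ (hcompl v) (by omega) (by omega))
  push Not at hdeg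
  by_cases htri : ∃ u v, G.Adj u v ∧ (G.neighborSet u ∩ G.neighborSet v).ncard < 4
  · obtain ⟨u, v, huv, h⟩ := htri
    have h' := ncard_contract huv
    exact k6_contract huv (ih (n - 1) (by omega) _ _ (hcompl v) (by omega) (by omega))
  push Not at htri
  have hlow : ∃ u, (G.neighborSet u).ncard ≤ 7 := by
    by_contra hc
    push Not at hc
    have h1 := sum_deg (G := G)
    have h2 : ∑ v : V, 8 ≤ ∑ v, (G.neighborSet v).ncard := Finset.sum_le_sum fun v _ => hc v
    rw [Finset.sum_const, Finset.card_univ, hV, smul_eq_mul] at h2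
    omega
  have hne : ∃ x y, G.Adj x y := by
    obtain ⟨u, -⟩ := hlow
    have h := hdeg u
    obtain ⟨y, hy⟩ := Set.nonempty_of_ncard_ne_zero (s := G.neighborSet u) (by omega)
    exact ⟨u, y, hy⟩
  rcases cs_of_low_degree hne htri hlow with h | h
  · exact h
  obtain ⟨l, V₁, V₂, hl, hU, ⟨x, hx⟩, ⟨y, hy⟩, hno, hcard, hcl⟩ := h
  by_contra hK
  have hcount := ncard_cliqueSum hU hno hcl
  have hsz := Set.ncard_union_add_ncard_inter V₁ V₂
  rw [hU, Set.ncard_univ, Nat.card_eq_fintype_card, hV] at hsz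
  -- both sides are large
  have hmem : ∀ z, z ∈ V₁ ∪ V₂ := fun z => hU ▸ Set.mem_univ z
  have hbig1 : 5 ≤ V₁.ncard := by
    have : G.neighborSet x ⊆ V₁ := by
      intro z hz
      by_contra hz'
      exact hno x hx z ⟨(hmem z).resolve_left hz', hz'⟩ hz
    have := Set.ncard_le_ncard this
    have := hdeg x
    omega
  have hbig2 : 5 ≤ V₂.ncard := by
    have : G.neighborSet y ⊆ V₂ := by
      intro z hz
      by_contra hz'
      exact hno z ⟨(hmem z).resolve_right hz', hz'⟩ y hy hz.symm
    have := Set.ncard_le_ncard this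
    have := hdeg y
    omega
  have hside : ∀ W : Set V, (∃ z, z ∉ W) → 5 ≤ W.ncard →
      (G.induce W).edgeSet.ncard + 10 ≤ 4 * W.ncard := by
    rintro W ⟨z, hz⟩ hW
    by_contra hc
    have hlt : W.ncard < n := by
      have := Set.ncard_lt_ncard (Set.ssubset_univ_iff.2 (fun e => hz (e ▸ Set.mem_univ z)) :
        W ⊂ Set.univ)
      rwa [Set.ncard_univ, Nat.card_eq_fintype_card, hV] at this
    refine hK (k6_induce W (ih W.ncard hlt _ _ ?_ (by omega) (by omega)))
    rw [← Nat.card_eq_fintype_card]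
    exact Nat.card_coe_set_eq W
  have e1 := hside V₁ ⟨y, hy.2⟩ hbig1
  have e2 := hside V₂ ⟨x, hx.2⟩ hbig2
  rw [hcard] at hcount hsz
  have hch : 4 * l ≤ l.choose 2 + 10 := by
    interval_cases l <;> decide
  omega

end K6P


/-- If `G` has an edge and every edge of `G` belongs to at least `4` triangles
(i.e. the endpoints of every edge have at least `4` common neighbors), then either
`G` has a `K₆` minor, or `G` is a clique sum over `K_l` for some `l ≤ 4`. -/
theorem hasK6Minor_or_cliqueSum_of_edges_in_triangles {V : Type*} [Fintype V]
    (G : SimpleGraph V)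
    (hedge : G.edgeSet.Nonempty)
    (htri : ∀ v u : V, G.Adj v u → 4 ≤ (G.neighborSet v ∩ G.neighborSet u).ncard) :
    HasMinor G (⊤ : SimpleGraph (Fin 6)) ∨
      ∃ (l : ℕ) (V₁ V₂ : Set V), l ≤ 4 ∧
        V₁ ∪ V₂ = Set.univ ∧
        (V₁ \ V₂).Nonempty ∧ (V₂ \ V₁).Nonempty ∧
        (∀ x ∈ V₁ \ V₂, ∀ y ∈ V₂ \ V₁, ¬ G.Adj x y) ∧
        (V₁ ∩ V₂).ncard = l ∧
        (∀ x ∈ V₁ ∩ V₂, ∀ y ∈ V₁ ∩ V₂, x ≠ y → G.Adj x y) := by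
  by_cases hK : HasMinor G (⊤ : SimpleGraph (Fin 6))
  · exact Or.inl hK
  have hne : ∃ x y, G.Adj x y := by
    obtain ⟨e, he⟩ := hedge
    induction e using Sym2.ind with
    | _ x y => exact ⟨x, y, he⟩
  have hlow : ∃ u, (G.neighborSet u).ncard ≤ 7 := by
    by_contra hc
    push Not at hc
    obtain ⟨x, y, hxy⟩ := hne
    have h1 := K6P.sum_deg (G := G)
    have h2 : ∑ v : V, 8 ≤ ∑ v, (G.neighborSet v).ncard := Finset.sum_le_sum fun v _ => hc v
    rw [Finset.sum_const, Finset.card_univ, smul_eq_mul] at h2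
    have h3 := Set.ncard_le_ncard (Set.subset_univ (G.neighborSet x))
    rw [Set.ncard_univ, Nat.card_eq_fintype_card] at h3
    have h4 := hc x
    exact hK (K6P.mader _ V G rfl (by omega) (by omega))
  exact K6P.cs_of_low_degree hne htri hlow
end

section
/- For every integer r with 2 ≤ r ≤ 6, every finite simple graph (with linearly ordered vertex set) that has no K_r minor is (r−2)-acyclic. Equivalently, in the language of exterior algebraic shifting: if {r−1, r} is a face of the exterior shifting Δ^e(G), then G has a K_r minor. -/
open scoped Classical

/-- The linear "rigidity-type" map of Kalai's hyperconnectivity: for `α : Fin d → V → ℝ`,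
it sends `w : E(G) → ℝ` to the function `(i, x) ↦ Σ_{y ~ x, x < y} w({x,y})·α i y
− Σ_{y ~ x, y < x} w({x,y})·α i y`. -/
noncomputable def rigMap {V : Type*} [Fintype V] [LinearOrder V] (G : SimpleGraph V)
    (d : ℕ) (α : Fin d → V → ℝ) (w : G.edgeSet → ℝ) : Fin d × V → ℝ :=
  fun p =>
    (∑ y : V, if h : G.Adj p.2 y ∧ p.2 < y then
        w ⟨s(p.2, y), G.mem_edgeSet.mpr h.1⟩ * α p.1 y else 0)
    - (∑ y : V, if h : G.Adj p.2 y ∧ y < p.2 then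
        w ⟨s(p.2, y), G.mem_edgeSet.mpr h.1⟩ * α p.1 y else 0)

/-- `G` is `d`-acyclic: the set of `α` for which `rigMap G d α` is injective is open
and dense in the space of all `α : Fin d → V → ℝ` (product topology). -/
def DAcyclic {V : Type*} [Fintype V] [LinearOrder V] (G : SimpleGraph V) (d : ℕ) : Prop :=
  IsOpen {α : Fin d → V → ℝ | Function.Injective (rigMap G d α)} ∧
  Dense {α : Fin d → V → ℝ | Function.Injective (rigMap G d α)}

set_option linter.unusedSectionVars false

noncomputable section Combi

variable {V : Type*} [Fintype V] [LinearOrder V]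

def Conn (G : SimpleGraph V) (B : Finset V) : Prop :=
  B.Nonempty ∧ ∀ x ∈ B, ∀ y ∈ B, Relation.ReflTransGen (fun a b => G.Adj a b ∧ a ∈ B ∧ b ∈ B) x y

def KM (G : SimpleGraph V) (r : ℕ) (S : Finset V) : Prop :=
  ∃ B : Fin r → Finset V, (∀ i, B i ⊆ S) ∧ (∀ i, Conn G (B i)) ∧
    (∀ i j, i ≠ j → Disjoint (B i) (B j)) ∧
    (∀ i j, i ≠ j → ∃ x ∈ B i, ∃ y ∈ B j, G.Adj x y)

theorem rtg_symm (G : SimpleGraph V) (B : Finset V) {x y : V}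
    (h : Relation.ReflTransGen (fun a b => G.Adj a b ∧ a ∈ B ∧ b ∈ B) x y) :
    Relation.ReflTransGen (fun a b => G.Adj a b ∧ a ∈ B ∧ b ∈ B) y x := by
  induction h with
  | refl => exact Relation.ReflTransGen.refl
  | tail _ h2 ih => exact Relation.ReflTransGen.head ⟨h2.1.symm, h2.2.2, h2.2.1⟩ ih

theorem conn_of_root (G : SimpleGraph V) (B : Finset V) (a : V) (ha : a ∈ B)
    (h : ∀ y ∈ B, Relation.ReflTransGen (fun a b => G.Adj a b ∧ a ∈ B ∧ b ∈ B) a y) :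
    Conn G B :=
  ⟨⟨a, ha⟩, fun x hx y hy => (rtg_symm G B (h x hx)).trans (h y hy)⟩

theorem conn_singleton (G : SimpleGraph V) (a : V) : Conn G {a} := by
  refine conn_of_root G _ a (by simp) ?_
  intro y hy
  rw [Finset.mem_singleton] at hy
  subst hy
  exact Relation.ReflTransGen.refl

theorem KM.mono {G H : SimpleGraph V} {r : ℕ} {S T : Finset V} (hST : S ⊆ T)
    (hGH : ∀ x ∈ S, ∀ y ∈ S, G.Adj x y → H.Adj x y) (h : KM G r S) : KM H r T := by
  obtain ⟨B, h1, h2, h3, h4⟩ := h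
  refine ⟨B, fun i => (h1 i).trans hST, fun i => ⟨(h2 i).1, fun x hx y hy => ?_⟩, h3, ?_⟩
  · refine Relation.ReflTransGen.mono ?_ _ _ ((h2 i).2 x hx y hy)
    rintro a b ⟨hab, ha, hb⟩
    exact ⟨hGH a (h1 i ha) b (h1 i hb) hab, ha, hb⟩
  · intro i j hij
    obtain ⟨x, hx, y, hy, hxy⟩ := h4 i j hij
    exact ⟨x, hx, y, hy, hGH x (h1 i hx) y (h1 j hy) hxy⟩

theorem KM.absorb {G H : SimpleGraph V} {r : ℕ} {S C : Finset V} {a : V}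
    (hSC : Disjoint S C) (hC : Conn G C) (haC : ∃ c ∈ C, G.Adj a c)
    (hH : ∀ x ∈ S, ∀ y ∈ S, H.Adj x y → G.Adj x y ∨ (x = a ∧ ∃ c ∈ C, G.Adj y c) ∨
      (y = a ∧ ∃ c ∈ C, G.Adj x c))
    (h : KM H r S) : KM G r (S ∪ C) := by
  obtain ⟨B, h1, h2, h3, h4⟩ := h
  have hsub : ∀ i, B i ⊆ (if a ∈ B i then B i ∪ C else B i) := by
    intro i
    split_ifs
    · exact Finset.subset_union_left
    · exact subset_rfl
  have hCsub : ∀ i, a ∈ B i → C ⊆ (if a ∈ B i then B i ∪ C else B i) := by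
    intro i hi
    rw [if_pos hi]
    exact Finset.subset_union_right
  refine ⟨fun i => if a ∈ B i then B i ∪ C else B i, ?_, ?_, ?_, ?_⟩
  · intro i
    dsimp only
    split_ifs
    · exact Finset.union_subset_union_left (h1 i)
    · exact (h1 i).trans Finset.subset_union_left
  · intro i
    dsimp only
    by_cases hi : a ∈ B i
    · rw [if_pos hi]
      have key : ∀ c ∈ C, Relation.ReflTransGen
          (fun x y => G.Adj x y ∧ x ∈ B i ∪ C ∧ y ∈ B i ∪ C) a c := by
        intro c hc
        obtain ⟨c0, hc0, hac0⟩ := haC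
        refine Relation.ReflTransGen.head (b := c0)
          ⟨hac0, Finset.mem_union_left _ hi, Finset.mem_union_right _ hc0⟩ ?_
        refine Relation.ReflTransGen.mono ?_ _ _ (hC.2 c0 hc0 c hc)
        rintro x y ⟨hxy, hx, hy⟩
        exact ⟨hxy, Finset.mem_union_right _ hx, Finset.mem_union_right _ hy⟩
      have key2 : ∀ y ∈ B i, (∃ c ∈ C, G.Adj y c) → Relation.ReflTransGen
          (fun x y => G.Adj x y ∧ x ∈ B i ∪ C ∧ y ∈ B i ∪ C) a y := by
        rintro y hy ⟨c, hc, hyc⟩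
        exact (key c hc).tail ⟨hyc.symm, Finset.mem_union_right _ hc, Finset.mem_union_left _ hy⟩
      refine conn_of_root G _ a (Finset.mem_union_left _ hi) ?_
      intro y hy
      rcases Finset.mem_union.1 hy with hy | hy
      · have := (h2 i).2 a hi y hy
        clear hy
        induction this with
        | refl => exact Relation.ReflTransGen.refl
        | @tail b c _ hbc ih =>
          obtain ⟨hbc, hb, hc⟩ := hbc
          rcases hH b (h1 i hb) c (h1 i hc) hbc with h | ⟨h, h'⟩ | ⟨h, h'⟩
          · exact (ih (Finset.mem_union_left _ hb)).tail
              ⟨h, Finset.mem_union_left _ hb, Finset.mem_union_left _ hc⟩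
          · exact key2 c hc h'
          · subst h
            exact Relation.ReflTransGen.refl
      · exact key y hy
    · rw [if_neg hi]
      refine ⟨(h2 i).1, fun x hx y hy => ?_⟩
      refine Relation.ReflTransGen.mono ?_ _ _ ((h2 i).2 x hx y hy)
      rintro b c ⟨hbc, hb, hc⟩
      rcases hH b (h1 i hb) c (h1 i hc) hbc with h | ⟨h, h'⟩ | ⟨h, h'⟩
      · exact ⟨h, hb, hc⟩
      · subst h; exact absurd hb hi
      · subst h; exact absurd hc hi
  · intro i j hij
    dsimp only
    have hd := h3 i j hij
    have hi := Finset.disjoint_of_subset_left (h1 i) hSC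
    have hj := Finset.disjoint_of_subset_left (h1 j) hSC
    split_ifs with p q q
    · exact absurd q (Finset.disjoint_left.1 hd p)
    · exact Finset.disjoint_union_left.2 ⟨hd, hj.symm⟩
    · exact Finset.disjoint_union_right.2 ⟨hd, hi⟩
    · exact hd
  · intro i j hij
    obtain ⟨x, hx, y, hy, hxy⟩ := h4 i j hij
    rcases hH x (h1 i hx) y (h1 j hy) hxy with h | ⟨h, c, hc, h'⟩ | ⟨h, c, hc, h'⟩
    · exact ⟨x, hsub i hx, y, hsub j hy, h⟩
    · subst h
      exact ⟨c, hCsub i hx hc, y, hsub j hy, h'.symm⟩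
    · subst h
      exact ⟨x, hsub i hx, c, hCsub j hy hc, h'⟩

theorem KM.apex {G : SimpleGraph V} {r : ℕ} {S : Finset V} {v : V} (hv : v ∉ S)
    (hadj : ∀ x ∈ S, G.Adj v x) (h : KM G r S) : KM G (r + 1) (insert v S) := by
  obtain ⟨B, h1, h2, h3, h4⟩ := h
  refine ⟨Fin.cons {v} B, ?_, ?_, ?_, ?_⟩
  · intro i
    refine Fin.cases ?_ (fun i => ?_) i
    · simp
    · simpa using (h1 i).trans (Finset.subset_insert v S)
  · intro i
    refine Fin.cases ?_ (fun i => ?_) i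
    · simpa using conn_singleton G v
    · simpa using h2 i
  · intro i j
    refine Fin.cases ?_ (fun i => ?_) i <;> refine Fin.cases ?_ (fun j => ?_) j
    · simp
    · intro _
      simpa using fun h => hv (h1 j h)
    · intro _
      simpa using fun h => hv (h1 i h)
    · intro hij
      simpa using h3 i j (fun h => hij (by rw [h]))
  · intro i j
    refine Fin.cases ?_ (fun i => ?_) i <;> refine Fin.cases ?_ (fun j => ?_) j
    · simp
    · intro _
      obtain ⟨y, hy⟩ := (h2 j).1
      exact ⟨v, by simp, y, by simpa using hy, hadj y (h1 j hy)⟩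
    · intro _
      obtain ⟨y, hy⟩ := (h2 i).1
      exact ⟨y, by simpa using hy, v, by simp, (hadj y (h1 i hy)).symm⟩
    · intro hij
      simpa using h4 i j (fun h => hij (by rw [h]))

theorem KM.of_nonempty {G : SimpleGraph V} {S : Finset V} (h : S.Nonempty) : KM G 1 S := by
  obtain ⟨x, hx⟩ := h
  refine ⟨fun _ => {x}, by simpa using hx, fun _ => conn_singleton G x, ?_, ?_⟩ <;>
  · intro i j hij
    exact absurd (Subsingleton.elim i j) hij

theorem KM.of_clique {G : SimpleGraph V} (r : ℕ) : ∀ (K : Finset V),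
    (∀ x ∈ K, ∀ y ∈ K, x ≠ y → G.Adj x y) → r ≤ K.card → KM G r K := by
  induction r with
  | zero =>
    intro K _ _
    exact ⟨fun i => i.elim0, fun i => i.elim0, fun i => i.elim0, fun i => i.elim0, fun i => i.elim0⟩
  | succ r ih =>
    intro K hK hr
    obtain ⟨v, hv⟩ : K.Nonempty := Finset.card_pos.1 (by omega)
    have := ih (K.erase v) (fun x hx y hy => hK x (Finset.mem_of_mem_erase hx) y
      (Finset.mem_of_mem_erase hy)) (by rw [Finset.card_erase_of_mem hv]; omega)
    have := this.apex (v := v) (by simp) (fun x hx => hK v hv x (Finset.mem_of_mem_erase hx)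
      (Finset.ne_of_mem_erase hx).symm)
    rwa [Finset.insert_erase hv] at this

theorem KM.hasMinor {G : SimpleGraph V} {r : ℕ} {S : Finset V} (h : KM G r S) :
    HasMinor G (⊤ : SimpleGraph (Fin r)) := by
  obtain ⟨B, h1, h2, h3, h4⟩ := h
  refine ⟨fun i => (B i : Set V), fun i => by simpa using (h2 i).1, fun i j hij => by
    simpa using h3 i j hij, fun i => ?_, fun i j hij => by simpa using h4 i j (by simpa using hij)⟩
  have : ∀ x (hx : x ∈ B i) y (_ : Relation.ReflTransGen
      (fun a b => G.Adj a b ∧ a ∈ B i ∧ b ∈ B i) x y) (hy : y ∈ B i),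
      (G.induce (B i : Set V)).Reachable ⟨x, hx⟩ ⟨y, hy⟩ := by
    intro x hx y h
    induction h with
    | refl => intro _; exact SimpleGraph.Reachable.refl _
    | tail _ hbc ih =>
      intro hy
      exact (ih hbc.2.1).trans (SimpleGraph.Adj.reachable (by simpa using hbc.1))
  obtain ⟨x0, hx0⟩ := (h2 i).1
  have hne : Nonempty (B i : Set V) := ⟨⟨x0, hx0⟩⟩
  refine SimpleGraph.Connected.mk ?_
  rintro ⟨x, hx⟩ ⟨y, hy⟩
  exact this x hx y ((h2 i).2 x hx y hy) hy

def contr (G : SimpleGraph V) (u v : V) : SimpleGraph V where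
  Adj x y := x ≠ y ∧ x ≠ v ∧ y ≠ v ∧ (G.Adj x y ∨ (x = u ∧ G.Adj y v) ∨ (y = u ∧ G.Adj x v))
  symm := ⟨by
    rintro x y ⟨h1, h2, h3, h4⟩
    refine ⟨h1.symm, h3, h2, ?_⟩
    rcases h4 with h | h | h
    · exact Or.inl h.symm
    · exact Or.inr (Or.inr h)
    · exact Or.inr (Or.inl h)⟩
  loopless := ⟨fun x h => h.1 rfl⟩

theorem KM.of_contr {G : SimpleGraph V} {u v : V} {r : ℕ} {S : Finset V} (huv : G.Adj u v)
    (hv : v ∈ S) (h : KM (contr G u v) r (S.erase v)) : KM G r S := by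
  have := KM.absorb (C := {v}) (a := u) (by simp) (conn_singleton G v) ⟨v, by simp, huv⟩ ?_ h
  · refine this.mono ?_ (fun _ _ _ _ h => h)
    intro x hx
    simp only [Finset.mem_union, Finset.mem_erase, Finset.mem_singleton] at hx
    rcases hx with hx | hx
    · exact hx.2
    · rw [hx]; exact hv
  · intro x _ y _ hxy
    simpa using hxy.2.2.2

def nb (G : SimpleGraph V) (S : Finset V) (x : V) : Finset V := S.filter (fun y => G.Adj x y)
def cm (G : SimpleGraph V) (S : Finset V) (x y : V) : Finset V :=
  S.filter (fun z => G.Adj x z ∧ G.Adj y z)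
def ds (G : SimpleGraph V) (S : Finset V) : ℕ := ∑ x ∈ S, (nb G S x).card
def eds (G : SimpleGraph V) (S : Finset V) : Finset (V × V) :=
  (S ×ˢ S).filter (fun p => G.Adj p.1 p.2 ∧ p.1 < p.2)

theorem mem_nb {G : SimpleGraph V} {S : Finset V} {x y : V} :
    y ∈ nb G S x ↔ y ∈ S ∧ G.Adj x y := by simp [nb]
theorem mem_cm {G : SimpleGraph V} {S : Finset V} {x y z : V} :
    z ∈ cm G S x y ↔ z ∈ S ∧ G.Adj x z ∧ G.Adj y z := by simp [cm]
theorem contr_adj {G : SimpleGraph V} {u v x y : V} : (contr G u v).Adj x y ↔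
    x ≠ y ∧ x ≠ v ∧ y ≠ v ∧ (G.Adj x y ∨ (x = u ∧ G.Adj y v) ∨ (y = u ∧ G.Adj x v)) := Iff.rfl

theorem ds_eq (G : SimpleGraph V) (S : Finset V) : ds G S = 2 * (eds G S).card := by
  have h1 : ds G S = ((S ×ˢ S).filter (fun p => G.Adj p.1 p.2)).card := by
    unfold ds nb
    rw [Finset.card_filter, Finset.sum_product]
    simp only [Finset.card_filter]
  have h2 : (S ×ˢ S).filter (fun p : V × V => G.Adj p.1 p.2) =
      eds G S ∪ (eds G S).map (Equiv.prodComm V V).toEmbedding := by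
    ext ⟨x, y⟩
    simp only [eds, Finset.mem_filter, Finset.mem_product, Finset.mem_union, Finset.mem_map_equiv,
      Equiv.prodComm_symm, Equiv.prodComm_apply, Prod.swap_prod_mk]
    constructor
    · rintro ⟨⟨hx, hy⟩, h⟩
      rcases lt_trichotomy x y with hl | hl | hl
      · exact Or.inl ⟨⟨hx, hy⟩, h, hl⟩
      · exact absurd hl h.ne
      · exact Or.inr ⟨⟨hy, hx⟩, h.symm, hl⟩
    · rintro (⟨⟨hx, hy⟩, h, _⟩ | ⟨⟨hx, hy⟩, h, _⟩)
      · exact ⟨⟨hx, hy⟩, h⟩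
      · exact ⟨⟨hy, hx⟩, h.symm⟩
  have h3 : Disjoint (eds G S) ((eds G S).map (Equiv.prodComm V V).toEmbedding) := by
    rw [Finset.disjoint_left]
    rintro ⟨x, y⟩ ha hb
    simp only [eds, Finset.mem_filter, Finset.mem_product, Finset.mem_map_equiv,
      Equiv.prodComm_symm, Equiv.prodComm_apply, Prod.swap_prod_mk] at ha hb
    exact absurd ha.2.2 (not_lt.2 hb.2.2.le)
  rw [h1, h2, Finset.card_union_of_disjoint h3, Finset.card_map]
  ring

/-- Edge count of a contraction. -/
theorem ds_contr (G : SimpleGraph V) (S : Finset V) {u v : V} (hu : u ∈ S) (hv : v ∈ S)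
    (huv : G.Adj u v) :
    ds G S = ds (contr G u v) (S.erase v) + 2 + 2 * (cm G S u v).card := by
  have hne : u ≠ v := huv.ne
  set T := (S.erase v).erase u with hT
  have huT : u ∈ S.erase v := Finset.mem_erase.2 ⟨hne, hu⟩
  have e1 : ds G S = (nb G S v).card + ((nb G S u).card + ∑ x ∈ T, (nb G S x).card) := by
    unfold ds
    rw [← Finset.add_sum_erase S _ hv, ← Finset.add_sum_erase _ _ huT]
  have e2 : ds (contr G u v) (S.erase v) = (nb (contr G u v) (S.erase v) u).card +
      ∑ x ∈ T, (nb (contr G u v) (S.erase v) x).card := by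
    unfold ds
    rw [← Finset.add_sum_erase _ _ huT]
  have e3 : ∑ x ∈ T, (nb G S x).card = ∑ x ∈ T, (nb (contr G u v) (S.erase v) x).card +
      (cm G S u v).card := by
    have : (cm G S u v).card = ∑ x ∈ T, (if G.Adj u x ∧ G.Adj v x then 1 else 0) := by
      rw [← Finset.card_filter]
      congr 1
      ext x
      simp only [cm, hT, Finset.mem_filter, Finset.mem_erase]
      constructor
      · rintro ⟨h, h1, h2⟩
        exact ⟨⟨h1.ne', h2.ne', h⟩, h1, h2⟩
      · rintro ⟨⟨_, _, h⟩, h1, h2⟩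
        exact ⟨h, h1, h2⟩
    rw [this, ← Finset.sum_add_distrib]
    refine Finset.sum_congr rfl fun x hx => ?_
    simp only [hT, Finset.mem_erase] at hx
    obtain ⟨hxu, hxv, hxS⟩ := hx
    by_cases hxv' : G.Adj x v
    · by_cases hxu' : G.Adj x u
      · rw [if_pos ⟨hxu'.symm, hxv'.symm⟩]
        have : nb G S x = insert v (nb (contr G u v) (S.erase v) x) := by
          ext y
          simp only [mem_nb, contr_adj, Finset.mem_insert, Finset.mem_erase]
          constructor
          · rintro ⟨h1, h2⟩
            by_cases hy : y = v
            · exact Or.inl hy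
            · exact Or.inr ⟨⟨hy, h1⟩, h2.ne, hxv, hy, Or.inl h2⟩
          · rintro (h | ⟨⟨h1, h2⟩, h3, h4, h5, h6⟩)
            · subst h; exact ⟨hv, hxv'⟩
            · refine ⟨h2, ?_⟩
              rcases h6 with h | h | h
              · exact h
              · exact absurd h.1 hxu
              · rw [h.1]; exact hxu'
        rw [this, Finset.card_insert_of_notMem (by simp [mem_nb])]
      · rw [if_neg (fun h => hxu' h.1.symm), add_zero]
        have : (nb G S x).erase v = (nb (contr G u v) (S.erase v) x).erase u := by
          ext y
          simp only [mem_nb, contr_adj, Finset.mem_erase]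
          constructor
          · rintro ⟨hy, h1, h2⟩
            exact ⟨fun h => hxu' (h ▸ h2), ⟨hy, h1⟩, h2.ne, hxv, hy, Or.inl h2⟩
          · rintro ⟨hy, ⟨h1, h2⟩, h3, h4, h5, h6⟩
            refine ⟨h1, h2, ?_⟩
            rcases h6 with h | h | h
            · exact h
            · exact absurd h.1 hxu
            · exact absurd h.1 hy
        have hc := congrArg Finset.card this
        have m1 : v ∈ nb G S x := by simp [mem_nb, hv, hxv']
        have m2 : u ∈ nb (contr G u v) (S.erase v) x := by
          simp [mem_nb, contr_adj, hu, hne, hxu, hxv, hxv']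
        have q1 := Finset.card_erase_add_one m1
        have q2 := Finset.card_erase_add_one m2
        omega
    · rw [if_neg (fun h => hxv' h.2.symm), add_zero]
      congr 1
      ext y
      simp only [mem_nb, contr_adj, Finset.mem_erase]
      constructor
      · rintro ⟨h1, h2⟩
        have hy : y ≠ v := fun h => hxv' (h ▸ h2)
        exact ⟨⟨hy, h1⟩, h2.ne, hxv, hy, Or.inl h2⟩
      · rintro ⟨⟨h1, h2⟩, h3, h4, h5, h6⟩
        refine ⟨h2, ?_⟩
        rcases h6 with h | h | h
        · exact h
        · exact absurd h.1 hxu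
        · exact absurd h.2 hxv'
  have e4 : (nb G S v).card + (nb G S u).card =
      (nb (contr G u v) (S.erase v) u).card + 2 + (cm G S u v).card := by
    have hi : nb G S v ∩ nb G S u = cm G S u v := by
      ext y
      simp only [nb, cm, Finset.mem_inter, Finset.mem_filter]
      tauto
    have hun : nb G S v ∪ nb G S u =
        insert u (insert v (nb (contr G u v) (S.erase v) u)) := by
      ext y
      simp only [mem_nb, contr_adj, Finset.mem_union, Finset.mem_insert,
        Finset.mem_erase]
      constructor
      · rintro (⟨h1, h2⟩ | ⟨h1, h2⟩)
        · by_cases hy : y = u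
          · exact Or.inl hy
          · exact Or.inr (Or.inr ⟨⟨h2.ne', h1⟩, Ne.symm hy, hne, h2.ne',
              Or.inr (Or.inl ⟨trivial, h2.symm⟩)⟩)
        · by_cases hy : y = v
          · exact Or.inr (Or.inl hy)
          · exact Or.inr (Or.inr ⟨⟨hy, h1⟩, h2.ne, hne, hy, Or.inl h2⟩)
      · rintro (h | h | ⟨⟨h1, h2⟩, h3, h4, h5, h6⟩)
        · subst h; exact Or.inl ⟨hu, huv.symm⟩
        · subst h; exact Or.inr ⟨hv, huv⟩
        · rcases h6 with h | h | h
          · exact Or.inr ⟨h2, h⟩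
          · exact Or.inl ⟨h2, h.2.symm⟩
          · exact absurd h.1.symm h3
    have := Finset.card_union_add_card_inter (nb G S v) (nb G S u)
    rw [hi, hun, Finset.card_insert_of_notMem, Finset.card_insert_of_notMem] at this
    · omega
    · simp [mem_nb]
    · simp [mem_nb, hne]
  omega

end Combi

noncomputable section Combi2

variable {V : Type*} [Fintype V] [LinearOrder V]

theorem nb_erase (G : SimpleGraph V) (S : Finset V) {w : V} (hw : w ∈ S) (z : V) :
    (nb G S z).card = (nb G (S.erase w) z).card + if G.Adj z w then 1 else 0 := by
  split_ifs with h
  · have : nb G S z = insert w (nb G (S.erase w) z) := by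
      ext y
      simp only [mem_nb, Finset.mem_insert, Finset.mem_erase]
      constructor
      · rintro ⟨h1, h2⟩
        by_cases hy : y = w
        · exact Or.inl hy
        · exact Or.inr ⟨⟨hy, h1⟩, h2⟩
      · rintro (h1 | ⟨⟨_, h1⟩, h2⟩)
        · subst h1; exact ⟨hw, h⟩
        · exact ⟨h1, h2⟩
    rw [this, Finset.card_insert_of_notMem (by simp [mem_nb])]
  · rw [add_zero]
    congr 1
    ext y
    simp only [mem_nb, Finset.mem_erase]
    constructor
    · rintro ⟨h1, h2⟩
      exact ⟨⟨fun e => h (e ▸ h2), h1⟩, h2⟩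
    · rintro ⟨⟨_, h1⟩, h2⟩
      exact ⟨h1, h2⟩

theorem nb_erase_self (G : SimpleGraph V) (S : Finset V) (w : V) :
    nb G (S.erase w) w = nb G S w := by
  ext y
  simp only [mem_nb, Finset.mem_erase]
  constructor
  · rintro ⟨⟨_, h1⟩, h2⟩
    exact ⟨h1, h2⟩
  · rintro ⟨h1, h2⟩
    exact ⟨⟨h2.ne', h1⟩, h2⟩

theorem ds_erase (G : SimpleGraph V) (S : Finset V) {w : V} (hw : w ∈ S) :
    ds G S = ds G (S.erase w) + 2 * (nb G S w).card := by
  have h1 : ∑ x ∈ S.erase w, (nb G S x).card = ds G (S.erase w) + (nb G S w).card := by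
    rw [Finset.sum_congr rfl (fun x _ => nb_erase G S hw x), Finset.sum_add_distrib]
    congr 1
    rw [← Finset.card_filter, ← nb_erase_self]
    congr 1
    ext y
    simp [mem_nb, G.adj_comm]
  have h2 : ds G S = (nb G S w).card + ∑ x ∈ S.erase w, (nb G S x).card := by
    unfold ds
    exact (Finset.add_sum_erase S (fun x => (nb G S x).card) hw).symm
  omega

theorem nb_card_lt (G : SimpleGraph V) (S : Finset V) {w : V} (hw : w ∈ S) :
    (nb G S w).card + 1 ≤ S.card := by
  rw [← nb_erase_self]
  have : (nb G (S.erase w) w).card ≤ (S.erase w).card := Finset.card_filter_le _ _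
  have := Finset.card_erase_add_one hw
  omega

theorem ds_delete (G : SimpleGraph V) (S : Finset V) {a b : V} (h : (a, b) ∈ eds G S) :
    ds (G.deleteEdges {s(a, b)}) S + 2 = ds G S := by
  have : eds (G.deleteEdges {s(a, b)}) S = (eds G S).erase (a, b) := by
    ext ⟨x, y⟩
    have hab : a < b := by simp [eds] at h; exact h.2.2
    simp only [eds, Finset.mem_filter, Finset.mem_product, SimpleGraph.deleteEdges_adj,
      Set.mem_singleton_iff, Sym2.eq_iff, Finset.mem_erase, ne_eq, Prod.mk.injEq, not_or, not_and]
    constructor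
    · rintro ⟨h1, ⟨h2, h3, h4⟩, h5⟩
      exact ⟨h3, h1, h2, h5⟩
    · rintro ⟨h3, h1, h2, h5⟩
      refine ⟨h1, ⟨h2, h3, ?_⟩, h5⟩
      intro e1 e2
      subst e1 e2
      exact absurd h5 (not_lt.2 hab.le)
  have h2 := Finset.card_erase_add_one h
  rw [ds_eq, ds_eq, this]
  omega

theorem ds_add (G : SimpleGraph V) (S : Finset V) {a b : V} (ha : a ∈ S) (hb : b ∈ S)
    (hne : a ≠ b) (hab : ¬ G.Adj a b) : ds G S + 2 ≤ ds (G ⊔ SimpleGraph.edge a b) S := by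
  wlog hlt : a < b generalizing a b
  · have := this hb ha hne.symm (fun h => hab h.symm) (lt_of_le_of_ne (not_lt.1 hlt) hne.symm)
    rwa [SimpleGraph.edge_comm] at this
  have : insert (a, b) (eds G S) ⊆ eds (G ⊔ SimpleGraph.edge a b) S := by
    intro p hp
    rw [Finset.mem_insert] at hp
    rcases hp with rfl | hp
    · simp [eds, ha, hb, hlt, SimpleGraph.edge_adj, hne]
    · simp only [eds, Finset.mem_filter] at hp ⊢
      exact ⟨hp.1, Or.inl hp.2.1, hp.2.2⟩
  have h2 := Finset.card_le_card this
  rw [Finset.card_insert_of_notMem (by simp [eds, hab])] at h2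
  rw [ds_eq, ds_eq]
  omega

theorem exists_low (G : SimpleGraph V) (S : Finset V) (c : ℕ) (h : ds G S < c * S.card) :
    ∃ v ∈ S, (nb G S v).card < c := by
  by_contra hcon
  push Not at hcon
  have := Finset.card_nsmul_le_sum S (fun v => (nb G S v).card) c hcon
  simp only [smul_eq_mul] at this
  unfold ds at h
  rw [mul_comm] at h
  omega

theorem ds_ge (G : SimpleGraph V) (S : Finset V) (c : ℕ) (h : ∀ x ∈ S, c ≤ (nb G S x).card) :
    c * S.card ≤ ds G S := by
  have := Finset.card_nsmul_le_sum S (fun v => (nb G S v).card) c h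
  simp only [smul_eq_mul] at this
  rw [mul_comm]
  exact this

def Hyp (k : ℕ) : Prop := ∀ (G : SimpleGraph V) (N : Finset V), N.Nonempty →
  (∀ x ∈ N, k ≤ (nb G N x).card) → (k = 1 ∨ N.card ≤ 2 * k - 1) → KM G (k + 1) N

theorem nb_link (G : SimpleGraph V) (S : Finset V) (v x : V) :
    nb G (nb G S v) x = cm G S v x := by
  ext y
  simp only [mem_nb, mem_cm, and_assoc]

theorem KM.of_link {G : SimpleGraph V} {S : Finset V} {v : V} {r : ℕ} (hv : v ∈ S)
    (h : KM G r (nb G S v)) : KM G (r + 1) S := by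
  refine (h.apex (v := v) (by simp [mem_nb]) (fun x hx => (mem_nb.1 hx).2)).mono ?_
    (fun _ _ _ _ h => h)
  intro x hx
  rcases Finset.mem_insert.1 hx with rfl | hx
  · exact hv
  · exact (mem_nb.1 hx).1

theorem link_step {k : ℕ} (hyp : Hyp (V := V) k) (G : SimpleGraph V) (S : Finset V)
    (hE : ∀ x ∈ S, ∀ y ∈ S, G.Adj x y → k ≤ (cm G S x y).card) {v : V} (hv : v ∈ S)
    (hne : (nb G S v).Nonempty) (hd : k = 1 ∨ (nb G S v).card ≤ 2 * k - 1) :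
    KM G (k + 2) S := by
  refine KM.of_link hv (hyp G _ hne ?_ hd)
  intro x hx
  rw [nb_link]
  exact hE v hv x (mem_nb.1 hx).1 (mem_nb.1 hx).2

theorem mader {k : ℕ} (hk : 1 ≤ k) (hyp : Hyp (V := V) k) : ∀ (n : ℕ) (G : SimpleGraph V)
    (S : Finset V), S.card + ds G S ≤ n → k ≤ S.card →
    2 * k * S.card + 2 ≤ ds G S + k * (k + 1) → KM G (k + 2) S := by
  intro n
  induction n with
  | zero =>
    intro G S h1 h2 _
    omega
  | succ n ih =>
    intro G S h1 h2 h3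
    have hS : S.Nonempty := Finset.card_pos.1 (by omega)
    by_cases hc : S.card = k
    · exfalso
      have : ds G S ≤ S.card * (S.card - 1) := by
        have := Finset.sum_le_card_nsmul S (fun v => (nb G S v).card) (S.card - 1) (by
          intro x hx
          have := nb_card_lt G S hx
          omega)
        simpa [ds] using this
      rw [hc] at this h3
      obtain ⟨k, rfl⟩ : ∃ j, k = j + 1 := ⟨k - 1, by omega⟩
      simp only [Nat.add_sub_cancel] at this
      nlinarith
    have hS1 : k + 1 ≤ S.card := by omega
    by_cases hbig : 2 * k * S.card + 4 ≤ ds G S + k * (k + 1)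
    · have hpos : (eds G S).Nonempty := by
        rw [Finset.nonempty_iff_ne_empty]
        intro h0
        have : ds G S = 0 := by rw [ds_eq, h0]; simp
        rw [this] at hbig
        nlinarith
      obtain ⟨⟨a, b⟩, hab⟩ := hpos
      have hd := ds_delete G S hab
      refine (ih (G.deleteEdges {s(a, b)}) S (by omega) h2 (by omega)).mono subset_rfl ?_
      intro x _ y _ h
      exact (G.deleteEdges_adj.1 h).1
    by_cases hE : ∀ x ∈ S, ∀ y ∈ S, G.Adj x y → k ≤ (cm G S x y).card
    · by_cases hiso : ∃ v ∈ S, (nb G S v).card = 0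
      · obtain ⟨v, hv, hv0⟩ := hiso
        have hd := ds_erase G S hv
        have hcc := Finset.card_erase_add_one hv
        refine (ih G (S.erase v) (by omega) (by omega) ?_).mono (Finset.erase_subset _ _)
          (fun _ _ _ _ h => h)
        rw [← hcc] at h3
        nlinarith
      push Not at hiso
      by_cases hk1 : k = 1
      · obtain ⟨v, hv⟩ := hS
        exact link_step hyp G S hE hv (Finset.card_pos.1 (Nat.pos_of_ne_zero (hiso v hv)))
          (Or.inl hk1)
      · obtain ⟨v, hv, hlow⟩ := exists_low G S (2 * k) (by
          have : 2 ≤ k := by omega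
          have : 6 ≤ k * (k + 1) := by nlinarith
          omega)
        exact link_step hyp G S hE hv (Finset.card_pos.1 (Nat.pos_of_ne_zero (hiso v hv)))
          (Or.inr (by omega))
    · push Not at hE
      obtain ⟨x, hx, y, hy, hxy, hlt⟩ := hE
      have hd := ds_contr G S hx hy hxy
      have hcc := Finset.card_erase_add_one hy
      refine KM.of_contr hxy hy (ih _ _ (by omega) (by omega) ?_)
      rw [← hcc] at h3
      nlinarith

theorem hyp1 : Hyp (V := V) 1 := by
  intro G N ⟨x, hx⟩ h _
  obtain ⟨y, hy⟩ := Finset.card_pos.1 (h x hx)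
  obtain ⟨hy, hxy⟩ := mem_nb.1 hy
  have := KM.of_clique (G := G) 2 {x, y} (by
    intro a ha b hb hab
    simp only [Finset.mem_insert, Finset.mem_singleton] at ha hb
    rcases ha with rfl | rfl <;> rcases hb with rfl | rfl
    · exact absurd rfl hab
    · exact hxy
    · exact hxy.symm
    · exact absurd rfl hab) (by rw [Finset.card_pair hxy.ne])
  refine this.mono ?_ (fun _ _ _ _ h => h)
  intro z hz
  simp only [Finset.mem_insert, Finset.mem_singleton] at hz
  rcases hz with rfl | rfl <;> assumption

theorem hyp2 : Hyp (V := V) 2 := by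
  intro G N hN h _
  have := ds_ge G N 2 h
  exact mader le_rfl hyp1 _ G N le_rfl (Finset.card_pos.2 hN) (by omega)

theorem hyp3 : Hyp (V := V) 3 := by
  intro G N hN h hc
  have h1 := ds_ge G N 3 h
  obtain ⟨x, hx⟩ := hN
  have h2 := nb_card_lt G N hx
  have h3 := h x hx
  have h4 := ds_eq G N
  exact mader (by norm_num) hyp2 _ G N le_rfl (by omega) (by omega)

theorem mader2 (G : SimpleGraph V) (S : Finset V) (h1 : 2 ≤ S.card)
    (h2 : 4 * S.card ≤ ds G S + 4) : KM G 4 S :=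
  mader (by norm_num) hyp2 _ G S le_rfl h1 (by omega)

theorem mader3 (G : SimpleGraph V) (S : Finset V) (h1 : 3 ≤ S.card)
    (h2 : 6 * S.card ≤ ds G S + 10) : KM G 5 S :=
  mader (by norm_num) hyp3 _ G S le_rfl h1 (by omega)

theorem seven (G : SimpleGraph V) (N : Finset V) (hN : N.card = 7)
    (hdeg : ∀ x ∈ N, (nb G N x).card = 4) : KM G 5 N := by
  have hnn : ∀ x ∈ N, ((N.erase x).filter (fun y => ¬ G.Adj x y)).card = 2 := by
    intro x hx
    have h1 := Finset.card_filter_add_card_filter_not (s := N.erase x) (fun y => G.Adj x y)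
    have h2 := hdeg x hx
    rw [← nb_erase_self] at h2
    have h3 := Finset.card_erase_add_one hx
    unfold nb at h2
    omega
  obtain ⟨x, hx⟩ : N.Nonempty := Finset.card_pos.1 (by omega)
  obtain ⟨p, q, hpq, hpqe⟩ := Finset.card_eq_two.1 (hnn x hx)
  have hp : p ∈ (N.erase x).filter (fun y => ¬ G.Adj x y) := by rw [hpqe]; simp
  have hq : q ∈ (N.erase x).filter (fun y => ¬ G.Adj x y) := by rw [hpqe]; simp
  simp only [Finset.mem_filter, Finset.mem_erase] at hp hq
  have hex : ∀ z, z ≠ x → z ∈ N → ¬ G.Adj x z → ∃ z', ∀ y ∈ N, y ≠ z → y ≠ x → y ≠ z' →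
      G.Adj z y := by
    intro z hzx hz hxz
    have hm : x ∈ (N.erase z).filter (fun y => ¬ G.Adj z y) := by
      simp only [Finset.mem_filter, Finset.mem_erase]
      exact ⟨⟨hzx.symm, hx⟩, fun h => hxz h.symm⟩
    have h1 := Finset.card_erase_add_one hm
    rw [hnn z hz] at h1
    obtain ⟨z', hz'⟩ := Finset.card_eq_one.1 (Nat.succ_injective h1)
    refine ⟨z', fun y hy h1 h2 h3 => ?_⟩
    by_contra hcon
    have : y ∈ (((N.erase z).filter (fun y => ¬ G.Adj z y)).erase x) := by
      simp only [Finset.mem_filter, Finset.mem_erase]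
      exact ⟨h2, ⟨h1, hy⟩, hcon⟩
    rw [hz', Finset.mem_singleton] at this
    exact h3 this
  obtain ⟨p', hp'⟩ := hex p hp.1.1 hp.1.2 hp.2
  obtain ⟨q', hq'⟩ := hex q hq.1.1 hq.1.2 hq.2
  obtain ⟨y, hy, hybad⟩ := Finset.exists_mem_notMem_of_card_lt_card
    (s := ({x, p, q, p', q'} : Finset V)) (t := N)
    (lt_of_le_of_lt Finset.card_le_five (by omega))
  simp only [Finset.mem_insert, Finset.mem_singleton, not_or] at hybad
  obtain ⟨hyx, hyp, hyq, hyp', hyq'⟩ := hybad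
  have hnx : ∀ z ∈ N, z ≠ x → ¬ G.Adj x z → z = p ∨ z = q := by
    intro z hz hzx h
    have : z ∈ (N.erase x).filter (fun y => ¬ G.Adj x y) := by
      simp only [Finset.mem_filter, Finset.mem_erase]
      exact ⟨⟨hzx, hz⟩, h⟩
    rw [hpqe] at this
    simpa using this
  have hxy : G.Adj x y := by
    by_contra h
    rcases hnx y hy hyx h with h | h
    · exact hyp h
    · exact hyq h
  have hdom : ∀ z ∈ N, z ≠ x → ¬ G.Adj x z → G.Adj y z := by
    intro z hz hzx h
    rcases hnx z hz hzx h with h | h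
    · subst h; exact (hp' y hy hyp hyx hyp').symm
    · subst h; exact (hq' y hy hyq hyx hyq').symm
  -- the five remaining vertices
  have hxe : x ∈ N.erase y := Finset.mem_erase.2 ⟨Ne.symm hyx, hx⟩
  set R := (N.erase y).erase x with hR
  suffices hK : KM G 4 R by
    refine KM.of_contr hxy hy ?_
    have h4 : KM (contr G x y) 4 R := by
      refine hK.mono subset_rfl ?_
      intro a ha b hb hab
      rw [contr_adj]
      simp only [hR, Finset.mem_erase] at ha hb
      exact ⟨hab.ne, ha.2.1, hb.2.1, Or.inl hab⟩
    have h5 := h4.apex (v := x) (by simp [hR]) (by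
      intro z hz
      simp only [hR, Finset.mem_erase] at hz
      rw [contr_adj]
      refine ⟨Ne.symm hz.1, Ne.symm hyx, hz.2.1, ?_⟩
      by_cases h : G.Adj x z
      · exact Or.inl h
      · exact Or.inr (Or.inl ⟨rfl, (hdom z hz.2.2 hz.1 h).symm⟩))
    rwa [hR, Finset.insert_erase hxe] at h5
  have hR5 : R.card = 5 := by
    have h1 := Finset.card_erase_add_one hy
    have h2 := Finset.card_erase_add_one hxe
    rw [← hR] at h2
    omega
  have hdR : ∀ z, (nb G N z).card = (nb G R z).card + (if G.Adj z x then 1 else 0) +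
      (if G.Adj z y then 1 else 0) := by
    intro z
    rw [nb_erase G N hy z, nb_erase G _ hxe z]
  have hdsN : ds G N = 28 := by
    unfold ds
    rw [Finset.sum_congr rfl hdeg]
    simp [hN]
  have hdsR : ds G R = 14 := by
    have h1 := ds_erase G N hy
    have h2 := ds_erase G (N.erase y) hxe
    rw [← hR] at h2
    have h3 := nb_erase G N hy x
    rw [if_pos hxy] at h3
    have h4 := hdeg x hx
    have h5 := hdeg y hy
    omega
  have hcm : (cm G N x y).card = 1 := by
    have h1 := Finset.card_union_add_card_inter (nb G N x) (nb G N y)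
    have h2 : nb G N x ∩ nb G N y = cm G N x y := by
      ext z
      simp only [mem_nb, mem_cm, Finset.mem_inter]
      tauto
    have h3 : nb G N x ∪ nb G N y = N := by
      ext z
      simp only [mem_nb, Finset.mem_union]
      constructor
      · rintro (h | h) <;> exact h.1
      · intro hz
        by_cases hzx : z = x
        · subst hzx; exact Or.inr ⟨hz, hxy.symm⟩
        · by_cases h : G.Adj x z
          · exact Or.inl ⟨hz, h⟩
          · exact Or.inr ⟨hz, hdom z hz hzx h⟩
    rw [h2, h3, hdeg x hx, hdeg y hy] at h1
    omega
  obtain ⟨c, hc⟩ := Finset.card_eq_one.1 hcm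
  have hcmem : c ∈ cm G N x y := by rw [hc]; simp
  obtain ⟨hcN, hxc, hyc⟩ := mem_cm.1 hcmem
  have hcR : c ∈ R := by
    simp only [hR, Finset.mem_erase]
    exact ⟨hxc.ne', hyc.ne', hcN⟩
  have hdc : (nb G R c).card = 2 := by
    have h1 := hdR c
    rw [if_pos hxc.symm, if_pos hyc.symm, hdeg c hcN] at h1
    omega
  have hdo : ∀ z ∈ R, z ≠ c → (nb G R z).card = 3 := by
    intro z hz hzc
    simp only [hR, Finset.mem_erase] at hz
    have h1 := hdR z
    rw [hdeg z hz.2.2] at h1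
    by_cases h : G.Adj x z
    · have h' : ¬ G.Adj z y := by
        intro h'
        have : z ∈ cm G N x y := mem_cm.2 ⟨hz.2.2, h, h'.symm⟩
        rw [hc, Finset.mem_singleton] at this
        exact hzc this
      rw [if_pos h.symm, if_neg h'] at h1
      omega
    · rw [if_neg (fun h' => h h'.symm), if_pos (hdom z hz.2.2 hz.1 h).symm] at h1
      omega
  obtain ⟨s, t, hst, hste⟩ := Finset.card_eq_two.1 hdc
  have hs : s ∈ R ∧ G.Adj c s := mem_nb.1 (by rw [hste]; simp)
  have ht : t ∈ R ∧ G.Adj c t := mem_nb.1 (by rw [hste]; simp)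
  have hRc := Finset.card_erase_add_one hcR
  by_cases hadj : G.Adj s t
  · exfalso
    have hsub : (R.erase c).erase s ⊆ nb G (R.erase c) s := by
      intro z hz
      simp only [Finset.mem_erase] at hz
      obtain ⟨hzs, hzc, hzR⟩ := hz
      rw [mem_nb]
      refine ⟨Finset.mem_erase.2 ⟨hzc, hzR⟩, ?_⟩
      by_cases hzt : z = t
      · rw [hzt]; exact hadj
      · have hcz : ¬ G.Adj z c := by
          intro h
          have : z ∈ nb G R c := mem_nb.2 ⟨hzR, h.symm⟩
          rw [hste] at this
          simp only [Finset.mem_insert, Finset.mem_singleton] at this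
          tauto
        have h1 := nb_erase G R hcR z
        rw [if_neg hcz, hdo z hzR hzc] at h1
        have hzz : z ∈ R.erase c := Finset.mem_erase.2 ⟨hzc, hzR⟩
        have h2 : nb G (R.erase c) z = (R.erase c).erase z := by
          apply Finset.eq_of_subset_of_card_le
          · intro w hw
            have := mem_nb.1 hw
            exact Finset.mem_erase.2 ⟨this.2.ne', this.1⟩
          · have := Finset.card_erase_add_one hzz
            omega
        have : s ∈ nb G (R.erase c) z := by
          rw [h2]
          simp only [Finset.mem_erase]
          exact ⟨Ne.symm hzs, hs.2.ne', hs.1⟩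
        exact (mem_nb.1 this).2.symm
    have h1 := Finset.card_le_card hsub
    have hsc : s ∈ R.erase c := Finset.mem_erase.2 ⟨hs.2.ne', hs.1⟩
    have h2 := Finset.card_erase_add_one hsc
    have h3 := nb_erase G R hcR s
    rw [if_pos hs.2.symm, hdo s hs.1 hs.2.ne'] at h3
    omega
  · refine KM.of_contr hs.2.symm hcR (mader2 _ _ (by omega) ?_)
    have h1 := ds_contr G R hs.1 hcR hs.2.symm
    have h2 : cm G R s c = ∅ := by
      rw [Finset.eq_empty_iff_forall_notMem]
      intro z hz
      obtain ⟨hzR, hsz, hcz⟩ := mem_cm.1 hz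
      have : z ∈ nb G R c := mem_nb.2 ⟨hzR, hcz⟩
      rw [hste] at this
      simp only [Finset.mem_insert, Finset.mem_singleton] at this
      rcases this with rfl | rfl
      · exact hsz.ne rfl
      · exact hadj hsz
    rw [h2, Finset.card_empty] at h1
    omega

theorem add_edge_minor (G : SimpleGraph V) (N : Finset V) (hN : N.card ≤ 7)
    (hdeg : ∀ x ∈ N, 4 ≤ (nb G N x).card) (hno : ¬ KM G 5 N) {a b : V} (ha : a ∈ N) (hb : b ∈ N)
    (hab : a ≠ b) (hnadj : ¬ G.Adj a b) : KM (G ⊔ SimpleGraph.edge a b) 5 N := by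
  have h1 := ds_ge G N 4 hdeg
  have h2 := nb_card_lt G N ha
  have h3 := hdeg a ha
  have h4 := ds_add G N ha hb hab hnadj
  by_cases h7 : N.card = 7 ∧ ds G N < 30
  · exfalso
    apply hno
    refine seven G N h7.1 ?_
    have h5 := ds_eq G N
    have h6 : ds G N = 28 := by omega
    intro x hx
    by_contra hcon
    have : 4 < (nb G N x).card := lt_of_le_of_ne (hdeg x hx) (Ne.symm hcon)
    have h8 : ∑ x ∈ N, 4 < ds G N := Finset.sum_lt_sum hdeg ⟨x, hx, this⟩
    simp at h8
    omega
  · exact mader3 _ N (by omega) (by omega)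

theorem low_edge (G : SimpleGraph V) (N : Finset V) (hne : N.Nonempty)
    (hdeg : ∀ x ∈ N, 4 ≤ (nb G N x).card) (hno : ¬ KM G 5 N) :
    ∃ x ∈ N, ∃ y ∈ N, G.Adj x y ∧ (cm G N x y).card ≤ 2 := by
  by_contra hcon
  push Not at hcon
  obtain ⟨a, ha⟩ := hne
  have h2 := nb_card_lt G N ha
  have h3 := hdeg a ha
  have hlt : ds G N < 6 * N.card := by
    by_contra h
    exact hno (mader3 G N (by omega) (by omega))
  obtain ⟨v, hv, hlow⟩ := exists_low G N 6 hlt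
  have h4 := hdeg v hv
  refine hno (link_step hyp3 G N (fun x hx y hy hxy => ?_) hv (Finset.card_pos.1 (by omega))
    (Or.inr (by omega)))
  have := hcon x hx y hy hxy
  omega

end Combi2

noncomputable section Alg

variable {V : Type*} [Fintype V] [LinearOrder V]

theorem inj_iff_det {I E : Type*} [Fintype I] [Fintype E] [DecidableEq E] (M : Matrix I E ℝ) :
    (∀ w, M.mulVec w = 0 → w = 0) ↔ (M.conjTranspose * M).det ≠ 0 := by
  rw [Ne, ← Matrix.exists_mulVec_eq_zero_iff]
  push Not
  constructor
  · intro h v hv hv0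
    exact hv (h v ((Matrix.conjTranspose_mul_self_mulVec_eq_zero M v).1 hv0))
  · intro h w hw
    by_contra hne
    exact h w hne ((Matrix.conjTranspose_mul_self_mulVec_eq_zero M w).2 hw)

theorem inj_open_dense {I E : Type*} [Fintype I] [Fintype E] {d : ℕ}
    (m : (Fin d → V → ℝ) → Matrix I E ℝ) (hc : Continuous m)
    (hl : ∀ (α β : Fin d → V → ℝ) (t : ℝ), m (α + t • (β - α)) = m α + t • (m β - m α))
    (hex : ∃ α0, ∀ w, (m α0).mulVec w = 0 → w = 0) :
    IsOpen {α | ∀ w, (m α).mulVec w = 0 → w = 0} ∧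
    Dense {α | ∀ w, (m α).mulVec w = 0 → w = 0} := by
  obtain ⟨α0, h0⟩ := hex
  simp only [inj_iff_det] at h0 ⊢
  constructor
  · refine isOpen_ne.preimage (f := fun α => ((m α).conjTranspose * m α).det) ?_
    exact (Continuous.matrix_det (hc.matrix_conjTranspose.matrix_mul hc))
  · intro α
    let Q : Matrix I E (Polynomial ℝ) :=
      fun i e => Polynomial.C (m α i e) + Polynomial.X * Polynomial.C (m α0 i e - m α i e)
    let p : Polynomial ℝ := (Q.transpose * Q).det
    have hp : ∀ t, p.eval t =
        ((m (α + t • (α0 - α))).conjTranspose * m (α + t • (α0 - α))).det := by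
      intro t
      have := (Polynomial.evalRingHom t).map_det (Q.transpose * Q)
      rw [Polynomial.coe_evalRingHom] at this
      rw [show p.eval t = _ from this]
      have hQ : ∀ i e, (Q i e).eval t = m (α + t • (α0 - α)) i e := by
        intro i e
        simp [Q, hl]
      congr 1
      ext i j
      simp only [RingHom.mapMatrix_apply, Matrix.map_apply, Matrix.mul_apply,
        Matrix.transpose_apply, Polynomial.coe_evalRingHom, Polynomial.eval_finsetSum,
        Polynomial.eval_mul, hQ, Matrix.conjTranspose_apply, star_trivial]
    have hp0 : p ≠ 0 := by
      intro h
      have := hp 1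
      rw [h] at this
      simp only [Polynomial.eval_zero, one_smul, add_sub_cancel] at this
      exact h0 this.symm
    have hd : Dense ({t : ℝ | p.eval t = 0}ᶜ) := by
      refine Set.Countable.dense_compl ℝ (Set.Finite.countable ?_)
      refine (p.roots.toFinset.finite_toSet).subset ?_
      intro t ht
      simpa [hp0] using ht
    have h1 := hd 0
    have hcont : Continuous (fun t : ℝ => α + t • (α0 - α)) := by fun_prop
    have := map_mem_closure hcont h1 (t := {α | ((m α).conjTranspose * m α).det ≠ 0}) (by
      intro t ht
      simp only [Set.mem_ofPred_eq]
      rw [← hp]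
      exact ht)
    simpa using this

def Good (G : SimpleGraph V) (S : Finset V) {d : ℕ} (α : Fin d → V → ℝ) : Prop :=
  ∀ A : V → V → ℝ, (∀ x y, A x y = - A y x) →
    (∀ x y, ¬ (G.Adj x y ∧ x ∈ S ∧ y ∈ S) → A x y = 0) →
    (∀ i x, ∑ y, A x y * α i y = 0) → ∀ x y, A x y = 0

def Ind (K : Finset V) {d : ℕ} (α : Fin d → V → ℝ) : Prop :=
  ∀ c : V → ℝ, (∀ y, y ∉ K → c y = 0) → (∀ i, ∑ y, c y * α i y = 0) → ∀ y, c y = 0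

theorem good_open_dense (G : SimpleGraph V) (S : Finset V) {d : ℕ}
    (hex : ∃ α : Fin d → V → ℝ, Good G S α) :
    IsOpen {α : Fin d → V → ℝ | Good G S α} ∧ Dense {α : Fin d → V → ℝ | Good G S α} := by
  let m : (Fin d → V → ℝ) → Matrix ((V × V) ⊕ ((V × V) ⊕ (Fin d × V))) (V × V) ℝ := fun α =>
    Matrix.of (fun r q => Sum.elim
      (fun p => (if q = p then 1 else 0) + (if q = p.swap then 1 else 0))
      (Sum.elim (fun p => if G.Adj p.1 p.2 ∧ p.1 ∈ S ∧ p.2 ∈ S then 0 else if q = p then 1 else 0)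
        (fun p => if q.1 = p.2 then α p.1 q.2 else 0)) r)
  have key : ∀ α, Good G S α ↔ ∀ w, (m α).mulVec w = 0 → w = 0 := by
    intro α
    have e : ∀ w : V × V → ℝ, (m α).mulVec w = 0 ↔ (∀ x y, w (x, y) = - w (y, x)) ∧
        (∀ x y, ¬ (G.Adj x y ∧ x ∈ S ∧ y ∈ S) → w (x, y) = 0) ∧
        (∀ i x, ∑ y, w (x, y) * α i y = 0) := by
      intro w
      rw [funext_iff]
      simp only [Sum.forall, Prod.forall, Pi.zero_apply]
      refine and_congr ?_ (and_congr ?_ ?_)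
      · refine forall_congr' fun x => forall_congr' fun y => ?_
        simp only [Matrix.mulVec, dotProduct, m, Matrix.of_apply, Sum.elim_inl, add_mul,
          Finset.sum_add_distrib, ite_mul, one_mul, zero_mul, Finset.sum_ite_eq',
          Finset.mem_univ, if_true, Prod.swap_prod_mk]
        exact add_eq_zero_iff_eq_neg
      · refine forall_congr' fun x => forall_congr' fun y => ?_
        simp only [Matrix.mulVec, dotProduct, m, Matrix.of_apply, Sum.elim_inl, Sum.elim_inr]
        by_cases h : G.Adj x y ∧ x ∈ S ∧ y ∈ S
        · simp [h]
        · simp [h]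
      · refine forall_congr' fun i => forall_congr' fun x => ?_
        simp only [Matrix.mulVec, dotProduct, m, Matrix.of_apply, Sum.elim_inr,
          Fintype.sum_prod_type, ite_mul, zero_mul]
        rw [Finset.sum_eq_single x]
        · simp [mul_comm]
        · intro b _ hb
          simp [hb]
        · simp
    constructor
    · intro h w hw
      obtain ⟨h1, h2, h3⟩ := (e w).1 hw
      ext ⟨x, y⟩
      exact h (fun x y => w (x, y)) h1 h2 h3 x y
    · intro h A h1 h2 h3 x y
      have := h (fun p => A p.1 p.2) ((e _).2 ⟨h1, h2, h3⟩)
      exact congrFun this (x, y)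
  simp only [key] at hex ⊢
  refine inj_open_dense m ?_ ?_ hex
  · refine continuous_matrix ?_
    rintro (p | p | p) q
    · exact continuous_const
    · exact continuous_const
    · simp only [m, Matrix.of_apply, Sum.elim_inr]
      split_ifs
      · fun_prop
      · exact continuous_const
  · intro α β t
    ext r q
    rcases r with p | p | p
    · simp [m]
    · simp [m]
    · by_cases h : q.1 = p.2
      · simp [m, h]
      · simp [m, h]

theorem ind_open_dense (K : Finset V) {d : ℕ} (hK : K.card ≤ d) :
    IsOpen {α : Fin d → V → ℝ | Ind K α} ∧ Dense {α : Fin d → V → ℝ | Ind K α} := by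
  let m : (Fin d → V → ℝ) → Matrix (V ⊕ Fin d) V ℝ := fun α =>
    Matrix.of (fun r q => Sum.elim
      (fun p => if p ∈ K then 0 else if q = p then 1 else 0)
      (fun i => α i q) r)
  have key : ∀ α, Ind K α ↔ ∀ w, (m α).mulVec w = 0 → w = 0 := by
    intro α
    have e : ∀ w : V → ℝ, (m α).mulVec w = 0 ↔ (∀ y, y ∉ K → w y = 0) ∧
        (∀ i, ∑ y, w y * α i y = 0) := by
      intro w
      rw [funext_iff]
      simp only [Sum.forall, Pi.zero_apply]
      refine and_congr ?_ ?_
      · refine forall_congr' fun x => ?_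
        simp only [Matrix.mulVec, dotProduct, m, Matrix.of_apply, Sum.elim_inl]
        by_cases h : x ∈ K
        · simp [h]
        · simp [h]
      · refine forall_congr' fun i => ?_
        simp only [Matrix.mulVec, dotProduct, m, Matrix.of_apply, Sum.elim_inr, mul_comm]
    constructor
    · intro h w hw
      obtain ⟨h1, h2⟩ := (e w).1 hw
      ext y
      exact h w h1 h2 y
    · intro h c h1 h2 y
      exact congrFun (h c ((e _).2 ⟨h1, h2⟩)) y
  have hex : ∃ α : Fin d → V → ℝ, Ind K α := by
    have hf : Fintype.card K ≤ Fintype.card (Fin d) := by simpa using hK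
    obtain ⟨f⟩ := Function.Embedding.nonempty_of_card_le hf
    refine ⟨fun i y => if h : y ∈ K then (if f ⟨y, h⟩ = i then 1 else 0) else 0, ?_⟩
    intro c h1 h2 y
    by_cases hy : y ∈ K
    · have := h2 (f ⟨y, hy⟩)
      rw [Finset.sum_eq_single y] at this
      · simpa [hy] using this
      · intro b _ hb
        by_cases hbK : b ∈ K
        · simp [hbK, hb]
        · simp [hbK]
      · simp
    · exact h1 y hy
  simp only [key] at hex ⊢
  refine inj_open_dense m ?_ ?_ hex
  · refine continuous_matrix ?_
    rintro (p | p) q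
    · exact continuous_const
    · simp only [m, Matrix.of_apply, Sum.elim_inr]
      fun_prop
  · intro α β t
    ext r q
    rcases r with p | p
    · simp [m]
    · simp [m]

def Acy (G : SimpleGraph V) (S : Finset V) (d : ℕ) : Prop := ∃ α : Fin d → V → ℝ, Good G S α

theorem exists_good_ind (G : SimpleGraph V) (S K : Finset V) {d : ℕ} (h : Acy G S d)
    (hK : K.card ≤ d) : ∃ α : Fin d → V → ℝ, Good G S α ∧ Ind K α := by
  have h1 := good_open_dense G S h
  have h2 := ind_open_dense (V := V) K hK
  obtain ⟨α, ha⟩ := (h1.2.inter_of_isOpen_left h2.2 h1.1).nonempty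
  exact ⟨α, ha.1, ha.2⟩

theorem exists_good_good_ind (G : SimpleGraph V) (S T K : Finset V) {d : ℕ} (h : Acy G S d)
    (h' : Acy G T d) (hK : K.card ≤ d) :
    ∃ α : Fin d → V → ℝ, Good G S α ∧ Good G T α ∧ Ind K α := by
  have h1 := good_open_dense G S h
  have h2 := ind_open_dense (V := V) K hK
  have h3 := good_open_dense G T h'
  obtain ⟨α, ha⟩ := (h1.2.inter_of_isOpen_left (h3.2.inter_of_isOpen_left h2.2 h3.1) h1.1).nonempty
  exact ⟨α, ha.1, ha.2.1, ha.2.2⟩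

theorem acy_of_contr (G : SimpleGraph V) (S : Finset V) {d : ℕ} {u v : V} (hu : u ∈ S)
    (huv : G.Adj u v) (hcm : (cm G S u v).card + 1 ≤ d)
    (h : Acy (contr G u v) (S.erase v) d) : Acy G S d := by
  have hne : u ≠ v := huv.ne
  obtain ⟨α, hg, hi⟩ := exists_good_ind _ _ (insert u (cm G S u v)) h
    ((Finset.card_insert_le _ _).trans hcm)
  let α' : Fin d → V → ℝ := fun i y => if y = v then α i u else α i y
  refine ⟨α', ?_⟩
  intro A hsk hsupp hrow
  have hdiag : ∀ x, A x x = 0 := fun x => by linarith [hsk x x]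
  let A' : V → V → ℝ := fun x y => if x = v ∨ y = v then 0 else
    A x y + (if x = u then A v y else 0) + (if y = u then A x v else 0)
  have hsum : ∀ i x, ∑ y, A x y * α' i y = A x v * α i u + ∑ y ∈ Finset.univ.erase v,
      A x y * α i y := by
    intro i x
    rw [← Finset.add_sum_erase Finset.univ _ (Finset.mem_univ v)]
    congr 1
    · simp [α']
    · refine Finset.sum_congr rfl fun y hy => ?_
      simp [α', Finset.ne_of_mem_erase hy]
  have hA' : ∀ x y, A' x y = 0 := by
    apply hg
    · intro x y
      simp only [A']
      by_cases hx : x = v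
      · simp [hx]
      by_cases hy : y = v
      · simp [hy]
      simp only [hx, hy, or_self, if_false]
      rw [hsk x y, hsk x v, hsk v y]
      split_ifs <;> ring
    · intro x y hnot
      simp only [A']
      by_cases hx : x = v
      · simp [hx]
      by_cases hy : y = v
      · simp [hy]
      simp only [hx, hy, or_self, if_false]
      by_cases hxy : x = y
      · subst hxy
        rw [hdiag, hsk x v]
        split_ifs <;> ring
      have hv0 : ∀ z w, A z w ≠ 0 → G.Adj z w ∧ z ∈ S ∧ w ∈ S := by
        intro z w hzw
        by_contra hcon
        exact hzw (hsupp z w hcon)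
      have t1 : A x y = 0 := by
        by_contra hcon
        have := hv0 _ _ hcon
        exact hnot ⟨contr_adj.2 ⟨hxy, hx, hy, Or.inl this.1⟩, by simp [hx, this.2.1],
          by simp [hy, this.2.2]⟩
      have t2 : (if x = u then A v y else 0) = 0 := by
        split_ifs with hxu
        · by_contra hcon
          have := hv0 _ _ hcon
          exact hnot ⟨contr_adj.2 ⟨hxy, hx, hy, Or.inr (Or.inl ⟨hxu, this.1.symm⟩)⟩,
            by simp [hxu, hne, hu], by simp [hy, this.2.2]⟩
        · rfl
      have t3 : (if y = u then A x v else 0) = 0 := by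
        split_ifs with hyu
        · by_contra hcon
          have := hv0 _ _ hcon
          exact hnot ⟨contr_adj.2 ⟨hxy, hx, hy, Or.inr (Or.inr ⟨hyu, this.1⟩)⟩,
            by simp [hx, this.2.1], by simp [hyu, hne, hu]⟩
        · rfl
      rw [t1, t2, t3]
      ring
    · intro i x
      by_cases hx : x = v
      · simp [A', hx]
      have e1 : ∑ y, A' x y * α i y = ∑ y ∈ Finset.univ.erase v,
          (A x y + (if x = u then A v y else 0) + (if y = u then A x v else 0)) * α i y := by
        rw [← Finset.add_sum_erase Finset.univ _ (Finset.mem_univ v)]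
        rw [show A' x v * α i v = 0 by simp [A'], zero_add]
        refine Finset.sum_congr rfl fun y hy => ?_
        simp [A', Finset.ne_of_mem_erase hy, hx]
      rw [e1]
      simp only [add_mul, Finset.sum_add_distrib]
      have e2 : ∑ y ∈ Finset.univ.erase v, (if y = u then A x v else 0) * α i y =
          A x v * α i u := by
        rw [Finset.sum_eq_single u]
        · simp
        · intro b _ hb
          simp [hb]
        · intro hn
          exact absurd (Finset.mem_erase.2 ⟨hne, Finset.mem_univ u⟩) hn
      rw [e2]
      have r1 := hrow i x
      rw [hsum] at r1
      by_cases hxu : x = u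
      · subst hxu
        have r2 := hrow i v
        rw [hsum, hdiag, zero_mul, zero_add] at r2
        simp only [if_true]
        rw [r2]
        linarith
      · simp only [hxu, if_false, zero_mul, Finset.sum_const_zero]
        linarith
  have hau : ∀ y, y ≠ u → y ≠ v → A v y = - A u y := by
    intro y hyu hyv
    have := hA' u y
    simp only [A', hne, hyv, hyu, or_self, if_false, if_true] at this
    linarith
  let c : V → ℝ := fun y => if y = v then 0 else if y = u then A u v else A u y
  have hc : ∀ y, c y = 0 := by
    apply hi
    · intro y hy
      rw [Finset.mem_insert, not_or] at hy
      simp only [c, hy.1, if_false]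
      split_ifs with hyv
      · rfl
      · by_contra hcon
        have h1 : G.Adj u y ∧ u ∈ S ∧ y ∈ S := by
          by_contra hh
          exact hcon (hsupp u y hh)
        have h2 : G.Adj v y ∧ v ∈ S ∧ y ∈ S := by
          by_contra hh
          have := hsupp v y hh
          rw [hau y hy.1 hyv] at this
          exact hcon (by linarith)
        exact hy.2 (mem_cm.2 ⟨h1.2.2, h1.1, h2.1⟩)
    · intro i
      have r1 := hrow i u
      rw [hsum] at r1
      rw [← Finset.add_sum_erase Finset.univ _ (Finset.mem_univ v)]
      have hm : u ∈ Finset.univ.erase v := Finset.mem_erase.2 ⟨hne, Finset.mem_univ u⟩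
      rw [← Finset.add_sum_erase _ _ hm]
      rw [← Finset.add_sum_erase _ _ hm, hdiag] at r1
      have : ∑ x ∈ (Finset.univ.erase v).erase u, c x * α i x =
          ∑ x ∈ (Finset.univ.erase v).erase u, A u x * α i x := by
        refine Finset.sum_congr rfl fun y hy => ?_
        simp only [Finset.mem_erase] at hy
        simp [c, hy.1, hy.2.1]
      rw [this]
      simp only [c, if_true, hne, if_false]
      linarith
  have hu0 : ∀ y, A u y = 0 := by
    intro y
    by_cases hyv : y = v
    · have := hc u
      simp only [c, hne, if_false, if_true] at this
      rw [hyv]; exact this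
    by_cases hyu : y = u
    · rw [hyu]; exact hdiag u
    have := hc y
    simpa only [c, hyv, hyu, if_false] using this
  have hv0 : ∀ y, A v y = 0 := by
    intro y
    by_cases hyv : y = v
    · rw [hyv]; exact hdiag v
    by_cases hyu : y = u
    · rw [hyu, hsk, hu0, neg_zero]
    rw [hau y hyu hyv, hu0, neg_zero]
  intro x y
  by_cases hx : x = v
  · rw [hx]; exact hv0 y
  by_cases hy : y = v
  · rw [hy, hsk, hv0, neg_zero]
  by_cases hxu : x = u
  · rw [hxu]; exact hu0 y
  by_cases hyu : y = u
  · rw [hyu, hsk, hu0, neg_zero]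
  have := hA' x y
  simpa [A', hx, hy, hxu, hyu] using this

end Alg

noncomputable section Alg2

variable {V : Type*} [Fintype V] [LinearOrder V]

theorem rank_bound (G : SimpleGraph V) (S : Finset V) {d : ℕ} (hd : 1 ≤ d) (hS : S.Nonempty)
    (h : Acy G S d) : (eds G S).card ≤ d * (S.card - 1) := by
  obtain ⟨x0, hx0⟩ := hS
  obtain ⟨α, hg, hi⟩ := exists_good_ind G S {x0} h (by simpa using hd)
  obtain ⟨j0, hj0⟩ : ∃ j, α j x0 ≠ 0 := by
    by_contra hcon
    push Not at hcon
    have := hi (fun y => if y = x0 then 1 else 0) (by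
      intro y hy
      simp only [Finset.mem_singleton] at hy
      simp [hy]) (by
      intro i
      simp [hcon]) x0
    simp at this
  let M : Matrix (Fin d × (S.erase x0 : Finset V)) (eds G S) ℝ := fun p e =>
    (if e.1.1 = p.2.1 then α p.1 e.1.2 else 0) - (if e.1.2 = p.2.1 then α p.1 e.1.1 else 0)
  have hinj : Function.Injective M.mulVecLin := by
    rw [← LinearMap.ker_eq_bot, LinearMap.ker_eq_bot']
    intro w hw
    let A : V → V → ℝ := fun x y => ∑ e : eds G S,
      w e * ((if e.1 = (x, y) then 1 else 0) - (if e.1 = (y, x) then 1 else 0))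
    have hmem : ∀ e : eds G S, G.Adj e.1.1 e.1.2 ∧ e.1.1 ∈ S ∧ e.1.2 ∈ S ∧ e.1.1 < e.1.2 := by
      rintro ⟨⟨a, b⟩, he⟩
      simp only [eds, Finset.mem_filter, Finset.mem_product] at he
      exact ⟨he.2.1, he.1.1, he.1.2, he.2.2⟩
    have hsk : ∀ x y, A x y = - A y x := by
      intro x y
      simp only [A]
      rw [← Finset.sum_neg_distrib]
      refine Finset.sum_congr rfl fun e _ => ?_
      ring
    have hsupp : ∀ x y, ¬ (G.Adj x y ∧ x ∈ S ∧ y ∈ S) → A x y = 0 := by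
      intro x y hnot
      refine Finset.sum_eq_zero fun e _ => ?_
      have he := hmem e
      rw [if_neg, if_neg, sub_zero, mul_zero]
      · intro h
        rw [h] at he
        exact hnot ⟨he.1.symm, he.2.2.1, he.2.1⟩
      · intro h
        rw [h] at he
        exact hnot ⟨he.1, he.2.1, he.2.2.1⟩
    have hrow : ∀ i x, ∑ y, A x y * α i y = ∑ e : eds G S, w e *
        ((if e.1.1 = x then α i e.1.2 else 0) - (if e.1.2 = x then α i e.1.1 else 0)) := by
      intro i x
      simp only [A, Finset.sum_mul]
      rw [Finset.sum_comm]
      refine Finset.sum_congr rfl fun e _ => ?_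
      simp only [mul_assoc]
      rw [← Finset.mul_sum]
      congr 1
      simp only [sub_mul, Finset.sum_sub_distrib, ite_mul, one_mul, zero_mul]
      congr 1
      · by_cases hx : e.1.1 = x
        · rw [if_pos hx, Finset.sum_eq_single e.1.2]
          · rw [if_pos]; rw [← hx]
          · intro b _ hb
            rw [if_neg]
            intro h
            rw [h] at hb
            exact hb rfl
          · simp
        · rw [if_neg hx]
          refine Finset.sum_eq_zero fun y _ => ?_
          rw [if_neg]
          intro h
          rw [h] at hx
          exact hx rfl
      · by_cases hx : e.1.2 = x
        · rw [if_pos hx, Finset.sum_eq_single e.1.1]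
          · rw [if_pos]; rw [← hx]
          · intro b _ hb
            rw [if_neg]
            intro h
            rw [h] at hb
            exact hb rfl
          · simp
        · rw [if_neg hx]
          refine Finset.sum_eq_zero fun y _ => ?_
          rw [if_neg]
          intro h
          rw [h] at hx
          exact hx rfl
    have hr1 : ∀ i x, x ≠ x0 → ∑ y, A x y * α i y = 0 := by
      intro i x hx
      by_cases hxS : x ∈ S
      · rw [hrow]
        have h0 : ∑ e : eds G S, M (i, ⟨x, Finset.mem_erase.2 ⟨hx, hxS⟩⟩) e * w e = 0 :=
          congrFun hw (i, ⟨x, Finset.mem_erase.2 ⟨hx, hxS⟩⟩)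
        refine Eq.trans (Finset.sum_congr rfl fun e _ => ?_) h0
        simp only [M]
        ring
      · refine Finset.sum_eq_zero fun y _ => ?_
        rw [hsupp x y (fun h => hxS h.2.1), zero_mul]
    have hsk2 : ∀ i j, (∑ y, A x0 y * α i y) * α j x0 = - ((∑ y, A x0 y * α j y) * α i x0) := by
      have e1 : ∀ i j, (∑ y, A x0 y * α i y) * α j x0 = ∑ x, ∑ y, A x y * α i y * α j x := by
        intro i j
        symm
        rw [Finset.sum_eq_single x0]
        · exact (Finset.sum_mul _ _ _).symm
        · intro x _ hx
          rw [← Finset.sum_mul, hr1 i x hx, zero_mul]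
        · simp
      intro i j
      rw [e1, e1, Finset.sum_comm, ← Finset.sum_neg_distrib]
      refine Finset.sum_congr rfl fun x _ => ?_
      rw [← Finset.sum_neg_distrib]
      refine Finset.sum_congr rfl fun y _ => ?_
      rw [hsk y x]
      ring
    have hj : ∑ y, A x0 y * α j0 y = 0 := by
      have := hsk2 j0 j0
      have h2 : (∑ y, A x0 y * α j0 y) * α j0 x0 = 0 := by linarith
      exact (mul_eq_zero.1 h2).resolve_right hj0
    have hr0 : ∀ i, ∑ y, A x0 y * α i y = 0 := by
      intro i
      have := hsk2 i j0
      rw [hj, zero_mul, neg_zero] at this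
      exact (mul_eq_zero.1 this).resolve_right hj0
    have hA := hg A hsk hsupp (by
      intro i x
      by_cases hx : x = x0
      · rw [hx]; exact hr0 i
      · exact hr1 i x hx)
    ext e
    have he := hA e.1.1 e.1.2
    simp only [A] at he
    rw [Finset.sum_eq_single e] at he
    · rw [if_pos rfl, if_neg] at he
      · simpa using he
      · intro h
        have := (hmem e).2.2.2
        have h1 := congrArg Prod.fst h
        simp only at h1
        exact absurd h1 this.ne
    · intro b _ hb
      rw [if_neg, if_neg]
      · simp
      · intro h
        have h1 := (hmem e).2.2.2
        have h2 := (hmem b).2.2.2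
        rw [h] at h2
        exact absurd h1 (not_lt.2 (le_of_lt h2))
      · intro h
        exact hb (Subtype.ext h)
    · simp
  have := card_le_of_injective ℝ M.mulVecLin hinj
  rw [Fintype.card_prod, Fintype.card_fin, Fintype.card_coe, Fintype.card_coe,
    Finset.card_erase_of_mem hx0] at this
  exact this

theorem exists_dual (K : Finset V) {d : ℕ} (α : Fin d → V → ℝ) (hi : Ind K α) :
    ∃ β : Fin d → V → ℝ, (∀ i y, y ∉ K → β i y = 0) ∧
      ∀ x ∈ K, ∀ y ∈ K, ∑ i, α i x * β i y = if x = y then 1 else 0 := by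
  let M : Matrix (Fin d) K ℝ := fun i y => α i y
  have hinj : LinearMap.ker M.mulVecLin = ⊥ := by
    rw [LinearMap.ker_eq_bot']
    intro w hw
    have := hi (fun y => if h : y ∈ K then w ⟨y, h⟩ else 0) (by
      intro y hy
      simp [hy]) (by
      intro i
      have h0 : ∑ y : K, M i y * w y = 0 := congrFun hw i
      rw [← Finset.sum_subset (Finset.subset_univ K), ← Finset.sum_coe_sort K]
      · refine Eq.trans (Finset.sum_congr rfl fun y _ => ?_) h0
        simp [M, mul_comm]
      · intro y _ hy
        simp [hy])
    ext ⟨y, hy⟩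
    simpa [hy] using this y
  obtain ⟨g, hg⟩ := LinearMap.exists_leftInverse_of_injective _ hinj
  refine ⟨fun i y => if h : y ∈ K then g (Pi.single i 1) ⟨y, h⟩ else 0, ?_, ?_⟩
  · intro i y hy
    simp [hy]
  · intro x hx y hy
    have h1 := congrFun (LinearMap.congr_fun hg (Pi.single ⟨x, hx⟩ 1)) ⟨y, hy⟩
    simp only [LinearMap.comp_apply, LinearMap.id_apply, Matrix.mulVecLin_apply,
      Matrix.mulVec_single_one] at h1
    have h2 : (M.col ⟨x, hx⟩) = ∑ i, α i x • (Pi.single i 1 : Fin d → ℝ) := by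
      ext j
      simp [M, Matrix.col, Finset.sum_apply, Pi.single_apply]
      rfl
    rw [h2, map_sum] at h1
    simp only [map_smul, Finset.sum_apply, Pi.smul_apply, smul_eq_mul] at h1
    simp only [hy, dif_pos]
    rw [h1, Pi.single_apply]
    simp only [Subtype.mk.injEq]
    by_cases hxy : x = y
    · simp [hxy]
    · simp [hxy, Ne.symm hxy]

theorem acy_glue (G : SimpleGraph V) (S C K : Finset V) {d : ℕ} (hCS : C ⊆ S) (hKS : K ⊆ S)
    (hCK : Disjoint C K) (hKd : K.card ≤ d) (hcl : ∀ x ∈ K, ∀ y ∈ K, x ≠ y → G.Adj x y)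
    (hsep : ∀ x ∈ C, ∀ y ∈ S, G.Adj x y → y ∈ C ∪ K)
    (h1 : Acy G (C ∪ K) d) (h2 : Acy G (S \ C) d) : Acy G S d := by
  obtain ⟨α, hg1, hg2, hi⟩ := exists_good_good_ind G _ _ K h1 h2 hKd
  obtain ⟨β, hβ0, hβ⟩ := exists_dual K α hi
  refine ⟨α, ?_⟩
  intro A hsk hsupp hrow
  have hv0 : ∀ z w, A z w ≠ 0 → G.Adj z w ∧ z ∈ S ∧ w ∈ S := by
    intro z w hzw
    by_contra hcon
    exact hzw (hsupp z w hcon)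
  let A1 : V → V → ℝ := fun x y => if x ∈ C ∨ y ∈ C then A x y else 0
  have hA1 : ∀ x y, A1 x y = - A1 y x := by
    intro x y
    simp only [A1]
    by_cases h : x ∈ C ∨ y ∈ C
    · rw [if_pos h, if_pos h.symm, hsk]
    · rw [if_neg h, if_neg (fun h' => h h'.symm), neg_zero]
  have hA1s : ∀ x y, A1 x y ≠ 0 → G.Adj x y ∧ x ∈ C ∪ K ∧ y ∈ C ∪ K := by
    intro x y hxy
    simp only [A1] at hxy
    by_cases h : x ∈ C ∨ y ∈ C
    · rw [if_pos h] at hxy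
      obtain ⟨q1, q2, q3⟩ := hv0 x y hxy
      rcases h with h | h
      · exact ⟨q1, Finset.mem_union_left _ h, hsep x h y q3 q1⟩
      · exact ⟨q1, hsep y h x q2 q1.symm, Finset.mem_union_left _ h⟩
    · rw [if_neg h] at hxy
      exact absurd rfl hxy
  let f : Fin d → V → ℝ := fun i x => ∑ y, A1 x y * α i y
  have hf : ∀ i x, x ∉ K → f i x = 0 := by
    intro i x hx
    by_cases hxC : x ∈ C
    · rw [← hrow i x]
      refine Finset.sum_congr rfl fun y _ => ?_
      simp [A1, hxC]
    · refine Finset.sum_eq_zero fun y _ => ?_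
      by_cases h : A1 x y = 0
      · rw [h, zero_mul]
      · have := (hA1s x y h).2.1
        rcases Finset.mem_union.1 this with h | h
        · exact absurd h hxC
        · exact absurd h hx
  let T : Fin d → Fin d → ℝ := fun i j => ∑ x, f i x * α j x
  have hT : ∀ i j, T i j = - T j i := by
    intro i j
    simp only [T, f, Finset.sum_mul]
    rw [Finset.sum_comm, ← Finset.sum_neg_distrib]
    refine Finset.sum_congr rfl fun x _ => ?_
    rw [← Finset.sum_neg_distrib]
    refine Finset.sum_congr rfl fun y _ => ?_
    rw [hA1 y x]
    ring
  have hfT : ∀ i x, f i x = ∑ j, T i j * β j x := by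
    intro i x
    by_cases hx : x ∈ K
    · have : ∑ j, T i j * β j x = ∑ z, f i z * ∑ j, α j z * β j x := by
        simp only [T, Finset.sum_mul, Finset.mul_sum]
        rw [Finset.sum_comm]
        refine Finset.sum_congr rfl fun z _ => Finset.sum_congr rfl fun j _ => ?_
        ring
      rw [this, Finset.sum_eq_single x]
      · rw [hβ x hx x hx]; simp
      · intro z _ hz
        by_cases hzK : z ∈ K
        · rw [hβ z hzK x hx, if_neg hz, mul_zero]
        · rw [hf i z hzK, zero_mul]
      · simp
    · rw [hf i x hx]
      symm
      refine Finset.sum_eq_zero fun j _ => ?_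
      rw [hβ0 j x hx, mul_zero]
  let B : V → V → ℝ := fun x y => ∑ i, f i x * β i y
  have hB : ∀ x y, B x y = - B y x := by
    intro x y
    simp only [B, hfT, Finset.sum_mul]
    rw [Finset.sum_comm, ← Finset.sum_neg_distrib]
    refine Finset.sum_congr rfl fun i _ => ?_
    rw [← Finset.sum_neg_distrib]
    refine Finset.sum_congr rfl fun j _ => ?_
    rw [hT j i]
    ring
  have hBrow : ∀ k x, ∑ y, B x y * α k y = f k x := by
    intro k x
    have e1 : ∑ y, B x y * α k y = - ∑ i, T i k * β i x := by
      simp only [T, Finset.sum_mul]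
      rw [Finset.sum_comm, ← Finset.sum_neg_distrib]
      refine Finset.sum_congr rfl fun y _ => ?_
      rw [hB x y]
      simp only [B]
      rw [neg_mul, Finset.sum_mul]
      congr 1
      refine Finset.sum_congr rfl fun i _ => ?_
      ring
    rw [e1, hfT, ← Finset.sum_neg_distrib]
    refine Finset.sum_congr rfl fun i _ => ?_
    rw [hT k i]
    ring
  have hBs : ∀ x y, B x y ≠ 0 → x ∈ K ∧ y ∈ K := by
    intro x y h
    by_contra hcon
    apply h
    refine Finset.sum_eq_zero fun i _ => ?_
    by_cases hx : x ∈ K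
    · rw [hβ0 i y (fun hy => hcon ⟨hx, hy⟩), mul_zero]
    · rw [hf i x hx, zero_mul]
  have hz := hg1 (fun x y => A1 x y - B x y) (by
      intro x y
      rw [hA1 x y, hB x y]
      ring) (by
      intro x y hnot
      have t1 : A1 x y = 0 := by
        by_contra h
        exact hnot (hA1s x y h)
      have t2 : B x y = 0 := by
        by_contra h
        obtain ⟨hx, hy⟩ := hBs x y h
        have hne : x ≠ y := by
          rintro rfl
          exact h (by linarith [hB x x])
        exact hnot ⟨hcl x hx y hy hne, Finset.mem_union_right _ hx, Finset.mem_union_right _ hy⟩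
      rw [t1, t2, sub_zero]) (by
      intro i x
      simp only [sub_mul, Finset.sum_sub_distrib]
      rw [hBrow]
      exact sub_self _)
  have hAC : ∀ x ∈ C, ∀ y, A x y = 0 := by
    intro x hx y
    have e1 := hz x y
    have e2 : B x y = 0 := by
      by_contra h
      exact Finset.disjoint_left.1 hCK hx (hBs x y h).1
    simp only [A1, hx, true_or, if_true, e2, sub_zero] at e1
    exact e1
  refine hg2 A hsk ?_ hrow
  intro x y hnot
  by_contra h
  obtain ⟨q1, q2, q3⟩ := hv0 x y h
  refine hnot ⟨q1, Finset.mem_sdiff.2 ⟨q2, fun hx => h (hAC x hx y)⟩,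
    Finset.mem_sdiff.2 ⟨q3, fun hy => h ?_⟩⟩
  rw [hsk, hAC y hy x, neg_zero]

theorem special (G : SimpleGraph V) (S : Finset V)
    (hE : ∀ x ∈ S, ∀ y ∈ S, G.Adj x y → 4 ≤ (cm G S x y).card) {v : V} (hv : v ∈ S)
    (hne : (nb G S v).Nonempty) (hd : (nb G S v).card ≤ 7) (hno : ¬ KM G 6 S) :
    ∃ C K : Finset V, C ⊆ S ∧ K ⊆ S ∧ C.Nonempty ∧ Disjoint C K ∧ K.card ≤ 4 ∧
      (∀ x ∈ K, ∀ y ∈ K, x ≠ y → G.Adj x y) ∧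
      (∀ x ∈ C, ∀ y ∈ S, G.Adj x y → y ∈ C ∪ K) ∧ v ∉ C ∪ K := by
  set N := nb G S v with hN
  have hdeg : ∀ x ∈ N, 4 ≤ (nb G N x).card := by
    intro x hx
    rw [hN, nb_link]
    exact hE v hv x (mem_nb.1 hx).1 (mem_nb.1 hx).2
  have hno5 : ¬ KM G 5 N := fun h => hno (KM.of_link hv h)
  have hvN : v ∉ N := by simp [hN, mem_nb]
  have hNS : N ⊆ S := fun x hx => (mem_nb.1 hx).1
  obtain ⟨x, hx, y, hy, hxy, hlow⟩ := low_edge G N hne hdeg hno5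
  have h4 := hE x (hNS hx) y (hNS hy) hxy
  obtain ⟨z, hz, hzn⟩ := Finset.exists_mem_notMem_of_card_lt_card
    (s := insert v (cm G N x y)) (t := cm G S x y)
    (lt_of_le_of_lt (Finset.card_insert_le _ _) (by omega))
  rw [Finset.mem_insert, not_or] at hzn
  obtain ⟨hzS, hxz, hyz⟩ := mem_cm.1 hz
  have hzN : z ∉ N := fun h => hzn.2 (mem_cm.2 ⟨h, hxz, hyz⟩)
  set W := S \ insert v N with hW
  have hzW : z ∈ W := by
    simp only [hW, Finset.mem_sdiff, Finset.mem_insert, not_or]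
    exact ⟨hzS, hzn.1, hzN⟩
  set C := W.filter (fun w => Relation.ReflTransGen
    (fun a b => G.Adj a b ∧ a ∈ W ∧ b ∈ W) z w) with hC
  have hCW : C ⊆ W := Finset.filter_subset _ _
  have hCmem : ∀ w ∈ C, w ∈ S ∧ w ≠ v ∧ w ∉ N := by
    intro w hw
    have := hCW hw
    simpa only [hW, Finset.mem_sdiff, Finset.mem_insert, not_or] using this
  have hzC : z ∈ C := Finset.mem_filter.2 ⟨hzW, Relation.ReflTransGen.refl⟩
  have hCstep : ∀ a ∈ C, ∀ b ∈ W, G.Adj a b → b ∈ C := by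
    intro a ha b hb hab
    have h1 := (Finset.mem_filter.1 ha)
    exact Finset.mem_filter.2 ⟨hb, h1.2.tail ⟨hab, h1.1, hb⟩⟩
  have hConn : Conn G C := by
    refine conn_of_root G C z hzC ?_
    intro w hw
    have h1 := (Finset.mem_filter.1 hw).2
    clear hw
    have : w ∈ C ∧ Relation.ReflTransGen (fun a b => G.Adj a b ∧ a ∈ C ∧ b ∈ C) z w := by
      induction h1 with
      | refl => exact ⟨hzC, Relation.ReflTransGen.refl⟩
      | tail _ hbc ih =>
        have := hCstep _ ih.1 _ hbc.2.2 hbc.1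
        exact ⟨this, ih.2.tail ⟨hbc.1, ih.1, this⟩⟩
    exact this.2
  set K := N.filter (fun y => ∃ c ∈ C, G.Adj y c) with hK
  have hKN : K ⊆ N := Finset.filter_subset _ _
  have hclique : ∀ a ∈ K, ∀ b ∈ K, a ≠ b → G.Adj a b := by
    intro a ha b hb hab
    by_contra hnadj
    obtain ⟨haN, haC⟩ := Finset.mem_filter.1 ha
    obtain ⟨hbN, hbC⟩ := Finset.mem_filter.1 hb
    have k5 := add_edge_minor G N hd hdeg hno5 haN hbN hab hnadj
    have k6 := k5.apex hvN (fun w hw => Or.inl (mem_nb.1 hw).2)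
    have k7 := KM.absorb (G := G) (C := C) (a := a) ?_ hConn haC ?_ k6
    · refine hno (k7.mono ?_ (fun _ _ _ _ h => h))
      intro w hw
      rcases Finset.mem_union.1 hw with hw | hw
      · rcases Finset.mem_insert.1 hw with rfl | hw
        · exact hv
        · exact hNS hw
      · exact (hCmem w hw).1
    · rw [Finset.disjoint_right]
      intro w hw
      rw [Finset.mem_insert, not_or]
      exact (hCmem w hw).2
    · intro s _ t _ hst
      rw [SimpleGraph.sup_adj, SimpleGraph.edge_adj] at hst
      rcases hst with h | ⟨⟨h1, h2⟩ | ⟨h1, h2⟩, _⟩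
      · exact Or.inl h
      · exact Or.inr (Or.inl ⟨h1, h2 ▸ hbC⟩)
      · exact Or.inr (Or.inr ⟨h2, h1 ▸ hbC⟩)
  refine ⟨C, K, fun w hw => (hCmem w hw).1, hKN.trans hNS, ⟨z, hzC⟩, ?_, ?_, hclique, ?_, ?_⟩
  · rw [Finset.disjoint_left]
    intro w hw hwK
    exact (hCmem w hw).2.2 (hKN hwK)
  · by_contra hbig
    exact hno5 ((KM.of_clique 5 K hclique (by omega)).mono hKN (fun _ _ _ _ h => h))
  · intro s hs t ht hst
    by_cases htN : t ∈ N
    · exact Finset.mem_union_right _ (Finset.mem_filter.2 ⟨htN, s, hs, hst.symm⟩)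
    · have htv : t ≠ v := by
        rintro rfl
        exact (hCmem s hs).2.2 (mem_nb.2 ⟨(hCmem s hs).1, hst.symm⟩)
      refine Finset.mem_union_left _ (hCstep s hs t ?_ hst)
      simp only [hW, Finset.mem_sdiff, Finset.mem_insert, not_or]
      exact ⟨ht, htv, htN⟩
  · intro h
    rcases Finset.mem_union.1 h with h | h
    · exact (hCmem v h).2.1 rfl
    · exact hvN (hKN h)

theorem ds_mono (G : SimpleGraph V) {S T : Finset V} (h : S ⊆ T) : ds G S ≤ ds G T := by
  rw [ds_eq, ds_eq]
  refine Nat.mul_le_mul_left _ (Finset.card_le_card ?_)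
  exact Finset.filter_subset_filter _ (Finset.product_subset_product h h)

theorem main_acy (k : ℕ) (hk1 : 1 ≤ k) (hk4 : k ≤ 4) : ∀ (n : ℕ) (G : SimpleGraph V)
    (S : Finset V), S.card + ds G S ≤ n → ¬ KM G (k + 2) S → Acy G S k := by
  intro n
  induction n with
  | zero =>
    intro G S h _
    have : S = ∅ := Finset.card_eq_zero.1 (by omega)
    subst this
    exact ⟨0, fun A _ h2 _ x y => h2 x y (by simp)⟩
  | succ n ih =>
    intro G S hn hno
    by_contra hA
    have hed : (eds G S).Nonempty := by
      rw [Finset.nonempty_iff_ne_empty]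
      intro h0
      apply hA
      refine ⟨0, fun A _ h2 _ x y => h2 x y ?_⟩
      rintro ⟨hxy, hx, hy⟩
      rcases lt_or_gt_of_ne hxy.ne with h | h
      · have : (x, y) ∈ eds G S := by simp [eds, hx, hy, hxy, h]
        rw [h0] at this
        simp at this
      · have : (y, x) ∈ eds G S := by simp [eds, hx, hy, hxy.symm, h]
        rw [h0] at this
        simp at this
    obtain ⟨⟨a, b⟩, hab⟩ := hed
    have hS : S.Nonempty := by
      simp only [eds, Finset.mem_filter, Finset.mem_product] at hab
      exact ⟨a, hab.1.1⟩
    have hScard := Finset.card_pos.2 hS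
    have hE : ∀ x ∈ S, ∀ y ∈ S, G.Adj x y → k ≤ (cm G S x y).card := by
      intro x hx y hy hxy
      by_contra hlt
      have hd := ds_contr G S hx hy hxy
      have hcc := Finset.card_erase_add_one hy
      refine hA (acy_of_contr G S hx hxy (by omega) (ih _ _ (by omega) ?_))
      exact fun h => hno (KM.of_contr hxy hy h)
    have hiso : ∀ v ∈ S, (nb G S v).Nonempty := by
      intro v hv
      rw [Finset.nonempty_iff_ne_empty]
      intro h0
      have hd := ds_erase G S hv
      have hcc := Finset.card_erase_add_one hv
      obtain ⟨α, hα⟩ := ih G (S.erase v) (by omega)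
        (fun h => hno (h.mono (Finset.erase_subset _ _) (fun _ _ _ _ h => h)))
      refine hA ⟨α, fun A q1 q2 q3 => hα A q1 (fun x y hnot => ?_) q3⟩
      apply q2
      rintro ⟨hxy, hx, hy⟩
      refine hnot ⟨hxy, Finset.mem_erase.2 ⟨?_, hx⟩, Finset.mem_erase.2 ⟨?_, hy⟩⟩
      · rintro rfl
        have : y ∈ nb G S x := mem_nb.2 ⟨hy, hxy⟩
        rw [h0] at this
        simp at this
      · rintro rfl
        have : x ∈ nb G S y := mem_nb.2 ⟨hx, hxy.symm⟩
        rw [h0] at this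
        simp at this
    by_cases hk : k = 1
    · subst hk
      obtain ⟨v, hv⟩ := hS
      exact hno (link_step hyp1 G S hE hv (hiso v hv) (Or.inl rfl))
    have hdel := ds_delete G S hab
    have hacy := ih (G.deleteEdges {s(a, b)}) S (by omega) (fun h => hno (h.mono subset_rfl
      (fun x _ y _ h => (G.deleteEdges_adj.1 h).1)))
    have hrank := rank_bound _ S hk1 hS hacy
    have hdq := ds_eq (G.deleteEdges {s(a, b)}) S
    obtain ⟨v, hv, hlow⟩ := exists_low G S (2 * k) (by
      obtain ⟨m, hm⟩ : ∃ m, S.card = m + 1 := ⟨S.card - 1, by omega⟩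
      rw [hm, Nat.add_sub_cancel] at hrank
      rw [hm]
      have : 2 ≤ k := by omega
      nlinarith)
    have hcase : k = 2 ∨ k = 3 ∨ k = 4 := by omega
    rcases hcase with rfl | rfl | rfl
    · exact hno (link_step hyp2 G S hE hv (hiso v hv) (Or.inr (by omega)))
    · exact hno (link_step hyp3 G S hE hv (hiso v hv) (Or.inr (by omega)))
    · obtain ⟨C, K, hCS, hKS, hCne, hCK, hK4, hcl, hsep, hvn⟩ :=
        special G S hE hv (hiso v hv) (by omega) hno
      have hsub1 : C ∪ K ⊆ S.erase v := by
        intro w hw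
        refine Finset.mem_erase.2 ⟨fun h => hvn (h ▸ hw), Finset.union_subset hCS hKS hw⟩
      have hc1 := Finset.card_le_card hsub1
      have hc2 := Finset.card_erase_add_one hv
      have hd1 := ds_mono G (hsub1.trans (Finset.erase_subset _ _))
      have hc3 := Finset.card_sdiff_add_card_eq_card hCS
      have hc4 := Finset.card_pos.2 hCne
      have hd2 := ds_mono G (Finset.sdiff_subset (s := S) (t := C))
      refine hA (acy_glue G S C K hCS hKS hCK hK4 hcl hsep ?_ ?_)
      · exact ih G _ (by omega) (fun h => hno (h.mono (hsub1.trans (Finset.erase_subset _ _))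
          (fun _ _ _ _ h => h)))
      · exact ih G _ (by omega) (fun h => hno (h.mono Finset.sdiff_subset
          (fun _ _ _ _ h => h)))

theorem acy_zero (G : SimpleGraph V) (S : Finset V) (hno : ¬ KM G 2 S) : Acy G S 0 := by
  refine ⟨0, fun A _ h2 _ x y => h2 x y ?_⟩
  rintro ⟨hxy, hx, hy⟩
  apply hno
  refine KM.of_link hx (KM.of_nonempty ⟨y, mem_nb.2 ⟨hy, hxy⟩⟩)

theorem rigMap_injective_iff (G : SimpleGraph V) (d : ℕ) (α : Fin d → V → ℝ) :
    Function.Injective (rigMap G d α) ↔ Good G Finset.univ α := by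
  have hadd : ∀ w w', rigMap G d α (w - w') = rigMap G d α w - rigMap G d α w' := by
    intro w w'
    ext p
    simp only [rigMap, Pi.sub_apply]
    simp only [← Finset.sum_sub_distrib]
    refine Finset.sum_congr rfl fun y _ => ?_
    split_ifs <;> ring
  have hker : Function.Injective (rigMap G d α) ↔ ∀ w, rigMap G d α w = 0 → w = 0 := by
    constructor
    · intro h w hw
      have h0 : rigMap G d α 0 = 0 := by
        have h1 := hadd 0 0
        rw [sub_self, sub_self] at h1
        exact h1
      exact h (hw.trans h0.symm)
    · intro h w w' hww
      have := h (w - w') (by rw [hadd, hww, sub_self])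
      exact sub_eq_zero.1 this
  rw [hker]
  constructor
  · intro h A hsk hsupp hrow
    let w : G.edgeSet → ℝ := fun e => A (e.1.inf) (e.1.sup)
    have hw := h w (by
      ext ⟨i, x⟩
      simp only [rigMap, Pi.zero_apply]
      rw [← Finset.sum_sub_distrib]
      refine Eq.trans (Finset.sum_congr rfl fun y _ => ?_) (hrow i x)
      by_cases hxy : G.Adj x y
      · rcases lt_or_gt_of_ne hxy.ne with hlt | hlt
        · rw [dif_pos ⟨hxy, hlt⟩, dif_neg (fun h => absurd h.2 (not_lt.2 hlt.le))]
          simp [w, hlt.le]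
        · rw [dif_neg (fun h => absurd h.2 (not_lt.2 (le_of_lt hlt))), dif_pos ⟨hxy, hlt⟩]
          simp only [w, Sym2.inf_mk, Sym2.sup_mk, inf_eq_right.2 (le_of_lt hlt),
            sup_eq_left.2 (le_of_lt hlt)]
          rw [hsk x y]
          ring
      · rw [dif_neg (fun h => hxy h.1), dif_neg (fun h => hxy h.1),
          hsupp x y (fun h => hxy h.1)]
        simp)
    have key : ∀ x y, x < y → A x y = 0 := by
      intro x y hlt
      by_cases hxy : G.Adj x y
      · have := congrFun hw ⟨s(x, y), G.mem_edgeSet.mpr hxy⟩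
        simpa [w, hlt.le] using this
      · exact hsupp x y (fun h => hxy h.1)
    intro x y
    rcases lt_trichotomy x y with hlt | hlt | hlt
    · exact key x y hlt
    · subst hlt
      linarith [hsk x x]
    · rw [hsk, key y x hlt, neg_zero]
  · intro h w hw
    let A : V → V → ℝ := fun x y =>
      (if h : G.Adj x y ∧ x < y then w ⟨s(x, y), G.mem_edgeSet.mpr h.1⟩ else 0) -
      (if h : G.Adj x y ∧ y < x then w ⟨s(x, y), G.mem_edgeSet.mpr h.1⟩ else 0)
    have hA := h A (by
      intro x y
      simp only [A, neg_sub]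
      congr 1
      · simp only [G.adj_comm x y, Sym2.eq_swap (a := x) (b := y)]
      · simp only [G.adj_comm x y, Sym2.eq_swap (a := x) (b := y)]) (by
      intro x y hnot
      have : ¬ G.Adj x y := fun h => hnot ⟨h, Finset.mem_univ _, Finset.mem_univ _⟩
      simp [A, this]) (by
      intro i x
      have := congrFun hw (i, x)
      simp only [rigMap, Pi.zero_apply] at this
      rw [← this, ← Finset.sum_sub_distrib]
      refine Finset.sum_congr rfl fun y _ => ?_
      simp only [A, sub_mul, dite_mul, zero_mul])
    ext ⟨e, he⟩
    induction e with
    | _ x y =>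
      have hxy : G.Adj x y := G.mem_edgeSet.mp he
      have h1 := hA x y
      simp only [A] at h1
      rcases lt_or_gt_of_ne hxy.ne with hlt | hlt
      · rw [dif_pos ⟨hxy, hlt⟩, dif_neg (fun h => absurd h.2 (not_lt.2 hlt.le))] at h1
        simpa using h1
      · rw [dif_neg (fun h => absurd h.2 (not_lt.2 (le_of_lt hlt))), dif_pos ⟨hxy, hlt⟩] at h1
        simpa using h1

end Alg2

/-- For `2 ≤ r ≤ 6`, every finite simple graph (with linearly ordered vertex set)
having no `K_r` minor is `(r-2)`-acyclic; equivalently, if `{r-1, r}` is a face of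
the exterior algebraic shifting `Δᵉ(G)`, then `G` has a `K_r` minor. -/
theorem krMinorFree_dAcyclic {n : ℕ} (G : SimpleGraph (Fin n))
    (r : ℕ) (hr2 : 2 ≤ r) (hr6 : r ≤ 6)
    (hfree : ¬ HasMinor G (⊤ : SimpleGraph (Fin r))) :
    DAcyclic G (r - 2) := by
  obtain ⟨k, rfl⟩ : ∃ k, r = k + 2 := ⟨r - 2, by omega⟩
  rw [Nat.add_sub_cancel]
  have hno : ¬ KM G (k + 2) Finset.univ := fun h => hfree h.hasMinor
  have hacy : Acy G Finset.univ k := by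
    rcases Nat.eq_zero_or_pos k with rfl | hk
    · exact acy_zero G _ hno
    · exact main_acy k hk (by omega) _ G _ le_rfl hno
  unfold DAcyclic
  simp only [rigMap_injective_iff]
  exact good_open_dense G Finset.univ hacy
end

section
/- Let G be a finite simple graph, let d ≥ 1, and let v be a vertex of G of degree at most d. If the induced subgraph of G on V(G) ∖ {v} is generically d-stress free, then G is generically d-stress free. -/
open scoped Classical

/-- `w : E(G) → ℝ` is a stress of the embedding `f : V → ℝ^d`. -/
noncomputable def IsStress {V : Type*} [Fintype V] (G : SimpleGraph V) (d : ℕ)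
    (f : V → EuclideanSpace ℝ (Fin d)) (w : G.edgeSet → ℝ) : Prop :=
  ∀ v : V,
    (∑ u : V, if h : G.Adj v u then w ⟨s(v, u), G.mem_edgeSet.mpr h⟩ • (f v - f u) else 0) = 0

/-- The set of `d`-embeddings of `G` whose only stress is the zero function. -/
def StressFreeEmbeddings {V : Type*} [Fintype V] (G : SimpleGraph V) (d : ℕ) :
    Set (V → EuclideanSpace ℝ (Fin d)) :=
  {f | ∀ w : G.edgeSet → ℝ, IsStress G d f w → w = 0}

/-- `G` is generically `d`-stress free: the set of `d`-embeddings with no nonzero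
stress is open and dense in the space of all `d`-embeddings. -/
def GenericallyStressFree {V : Type*} [Fintype V] (G : SimpleGraph V) (d : ℕ) : Prop :=
  IsOpen (StressFreeEmbeddings G d) ∧ Dense (StressFreeEmbeddings G d)


theorem aux_isOpen {V : Type*} [Fintype V] (G : SimpleGraph V) (d : ℕ) :
    IsOpen (StressFreeEmbeddings G d) := by
  let T : (V → EuclideanSpace ℝ (Fin d)) →
      ((G.edgeSet → ℝ) →ₗ[ℝ] (V → EuclideanSpace ℝ (Fin d))) := fun f =>
    { toFun := fun w v => ∑ u : V, if h : G.Adj v u then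
        w ⟨s(v, u), G.mem_edgeSet.mpr h⟩ • (f v - f u) else 0
      map_add' := by
        intro a b
        funext v
        simp only [Pi.add_apply]
        rw [← Finset.sum_add_distrib]
        refine Finset.sum_congr rfl fun u _ => ?_
        split_ifs
        · rw [add_smul]
        · simp
      map_smul' := by
        intro a b
        funext v
        simp only [Pi.smul_apply, RingHom.id_apply]
        rw [Finset.smul_sum]
        refine Finset.sum_congr rfl fun u _ => ?_
        split_ifs
        · rw [smul_eq_mul, mul_smul]
        · simp }
  have hc : Continuous fun f => LinearMap.toContinuousLinearMap (T f) := by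
    rw [continuous_clm_apply]
    intro w
    refine continuous_pi fun v => ?_
    change Continuous fun f : V → EuclideanSpace ℝ (Fin d) =>
      ∑ u : V, if h : G.Adj v u then
        w ⟨s(v, u), G.mem_edgeSet.mpr h⟩ • (f v - f u) else 0
    refine continuous_finsetSum _ fun u _ => ?_
    split_ifs
    · fun_prop
    · fun_prop
  have ho := (ContinuousLinearMap.isOpen_injective (𝕜 := ℝ) (E := G.edgeSet → ℝ)
    (F := V → EuclideanSpace ℝ (Fin d))).preimage hc
  convert ho using 1
  ext f
  simp only [Set.mem_preimage, Set.mem_ofPred_eq, StressFreeEmbeddings]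
  have := injective_iff_map_eq_zero (T f)
  refine Iff.trans ?_ this.symm
  refine forall_congr' fun w => imp_congr_left ?_
  exact (funext_iff (f := T f w) (g := 0)).symm

theorem aux_dense_li {N : Type*} [Fintype N] (d : ℕ) (hN : Fintype.card N ≤ d) :
    Dense {x : N → EuclideanSpace ℝ (Fin d) | LinearIndependent ℝ x} := by
  obtain ⟨φ⟩ : Nonempty (N ↪ Fin d) := by
    apply Function.Embedding.nonempty_of_card_le
    simpa using hN
  intro x
  let e : N → EuclideanSpace ℝ (Fin d) := fun i => EuclideanSpace.single (φ i) 1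
  let L : EuclideanSpace ℝ (Fin d) →ₗ[ℝ] (N → ℝ) :=
    { toFun := fun y j => y (φ j)
      map_add' := fun _ _ => rfl
      map_smul' := fun _ _ => rfl }
  let X : Matrix N N ℝ := Matrix.of fun i j => - x i (φ j)
  have hdense : Dense ({t : ℝ | X.charpoly.IsRoot t}ᶜ) :=
    (Polynomial.finite_setOfPred_isRoot X.charpoly_monic.ne_zero).countable.dense_compl ℝ
  have hc : Continuous fun t : ℝ => x + t • e := by fun_prop
  have h0 : x ∈ closure ((fun t : ℝ => x + t • e) '' ({t : ℝ | X.charpoly.IsRoot t}ᶜ)) := by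
    have := image_closure_subset_closure_image hc
      (Set.mem_image_of_mem (fun t : ℝ => x + t • e) (hdense 0))
    simpa using this
  refine closure_mono ?_ h0
  rintro _ ⟨t, ht, rfl⟩
  simp only [Set.mem_compl_iff, Set.mem_ofPred_eq, Polynomial.IsRoot, Matrix.eval_charpoly] at ht ⊢
  apply LinearIndependent.of_comp L
  have hu : IsUnit (Matrix.scalar N t - X) := by
    rw [Matrix.isUnit_iff_isUnit_det]
    exact isUnit_iff_ne_zero.mpr ht
  rw [← Matrix.linearIndependent_rows_iff_isUnit] at hu
  have hrow : (L ∘ (x + t • e)) = (Matrix.scalar N t - X).row := by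
    funext i j
    change x i (φ j) + t * (EuclideanSpace.single (φ i) (1 : ℝ) : EuclideanSpace ℝ (Fin d)) (φ j)
      = Matrix.diagonal (fun _ => t) i j - - x i (φ j)
    by_cases hij : i = j
    · subst hij
      simp
      ring
    · have : φ j ≠ φ i := fun h => hij (φ.injective h).symm
      simp [hij, this]
  exact hrow ▸ hu

theorem aux_dense_star {V : Type*} [Fintype V] (G : SimpleGraph V)
    (d : ℕ) (v : V) (hdeg : G.degree v ≤ d) :
    Dense {f : V → EuclideanSpace ℝ (Fin d) |
      LinearIndependent ℝ fun u : G.neighborFinset v => f v - f u} := by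
  have hd := aux_dense_li (N := G.neighborFinset v) d (by rw [Fintype.card_coe]; exact hdeg)
  let L : (V → EuclideanSpace ℝ (Fin d)) →ₗ[ℝ] (G.neighborFinset v → EuclideanSpace ℝ (Fin d)) :=
    { toFun := fun f u => f v - f u
      map_add' := by intro a b; funext u; simp; abel
      map_smul' := by intro a b; funext u; simp [smul_sub] }
  have hL : Function.Surjective L := by
    intro y
    refine ⟨fun u => if h : u ∈ G.neighborFinset v then - y ⟨u, h⟩ else 0, ?_⟩
    funext u
    have hu := u.2
    simp only [L, LinearMap.coe_mk, AddHom.coe_mk]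
    rw [dif_pos hu, dif_neg (by simp)]
    simp
  exact hd.preimage (LinearMap.toContinuousLinearMap L |>.isOpenMap hL)

theorem aux_restrict {V : Type*} [Fintype V] (G : SimpleGraph V)
    (d : ℕ) (v : V) (f : V → EuclideanSpace ℝ (Fin d))
    (hli : LinearIndependent ℝ fun u : G.neighborFinset v => f v - f u)
    (hf : (fun u : {x : V | x ≠ v} => f u) ∈
      StressFreeEmbeddings (G.induce {x : V | x ≠ v}) d) :
    f ∈ StressFreeEmbeddings G d := by
  intro w hw
  have hv : ∀ u (h : G.Adj v u), w ⟨s(v, u), G.mem_edgeSet.mpr h⟩ = 0 := by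
    have h1 := hw v
    rw [Fintype.linearIndependent_iff] at hli
    have h2 := hli (fun u => w ⟨s(v, u), G.mem_edgeSet.mpr ((G.mem_neighborFinset v u).mp u.2)⟩) (by
      rw [← h1, ← Finset.sum_subset (Finset.subset_univ (G.neighborFinset v)),
        ← Finset.sum_attach (G.neighborFinset v)]
      · refine Finset.sum_congr rfl fun u _ => ?_
        rw [dif_pos ((G.mem_neighborFinset v u).mp u.2)]
      · intro u _ hu
        rw [dif_neg (by simpa using hu)])
    intro u h
    exact h2 ⟨u, by simpa using h⟩
  have hadj : ∀ a b (h : G.Adj a b), w ⟨s(a, b), G.mem_edgeSet.mpr h⟩ = 0 := by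
    let w' : (G.induce {x : V | x ≠ v}).edgeSet → ℝ := fun e =>
      w ⟨e.1.map Subtype.val, by
        obtain ⟨e, he⟩ := e
        induction e with
        | _ a b => simpa using he⟩
    have hw' := hf w' (by
      intro a
      have h1 := hw a.1
      refine Eq.trans ?_ h1
      have h2 : (if h : G.Adj a.1 v then
          w ⟨s(a.1, v), G.mem_edgeSet.mpr h⟩ • (f a.1 - f v) else 0) = 0 := by
        split_ifs with h
        · have := hv a.1 h.symm
          simp only [Sym2.eq_swap (a := v)] at this
          rw [this, zero_smul]
        · rfl
      rw [← Finset.sum_subset (Finset.subset_univ ({v}ᶜ : Finset V))]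
      · rw [Finset.sum_subtype (p := fun x => x ∈ {x : V | x ≠ v}) ({v}ᶜ : Finset V) (by simp)]
        rfl
      · intro u _ hu
        have hu : u = v := by simpa using hu
        subst hu
        exact h2)
    intro a b h
    by_cases ha : a = v
    · subst ha
      exact hv b h
    by_cases hb : b = v
    · subst hb
      have := hv a h.symm
      simpa only [Sym2.eq_swap (a := b)] using this
    exact congrFun hw' ⟨s(⟨a, ha⟩, ⟨b, hb⟩), h⟩
  funext e
  obtain ⟨e, he⟩ := e
  induction e with
  | _ a b => exact hadj a b he

/-- Let `v` be a vertex of `G` of degree at most `d` (`d ≥ 1`). If the induced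
subgraph of `G` on `V(G) ∖ {v}` is generically `d`-stress free, then so is `G`. -/
theorem genericallyStressFree_of_deleteVertex {V : Type*} [Fintype V] (G : SimpleGraph V)
    (d : ℕ) (hd : 1 ≤ d) (v : V) (hdeg : G.degree v ≤ d)
    (h : GenericallyStressFree (G.induce {x : V | x ≠ v}) d) :
    GenericallyStressFree G d := by
  refine ⟨aux_isOpen G d, ?_⟩
  let R : (V → EuclideanSpace ℝ (Fin d)) →ₗ[ℝ] ({x : V | x ≠ v} → EuclideanSpace ℝ (Fin d)) :=
    { toFun := fun f u => f u
      map_add' := fun _ _ => rfl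
      map_smul' := fun _ _ => rfl }
  have hR : Function.Surjective R := by
    intro y
    refine ⟨fun u => if h : u ≠ v then y ⟨u, h⟩ else 0, ?_⟩
    funext u
    have hu : u.1 ≠ v := u.2
    simp only [R, LinearMap.coe_mk, AddHom.coe_mk]
    rw [dif_pos hu]
  let R' := LinearMap.toContinuousLinearMap R
  have h1 := h.2.preimage (R'.isOpenMap hR)
  have h2 := h.1.preimage R'.continuous
  refine (h1.inter_of_isOpen_left (aux_dense_star G d v hdeg) h2).mono ?_
  rintro f ⟨hf1, hf2⟩
  exact aux_restrict G d v f hf2 hf1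
end
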